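/- arXiv:1701.00787 — 4 statements merged into one kernel-verified Lean document; each statement's English description precedes it below -/
import Mathlib

section
/- Let α, β ∈ ℕ (nonnegative integers) with max{α, β} > 0, and let δ be a real number with δ ≥ α + 1. Then for every n ∈ ℕ (n ≥ 0) and every t ∈ (0, π], the integral F_n^{(α,β),δ}(t) is strictly positive. -/
open MeasureTheory Real Set

/-- Generalized binomial coefficient `C(u, v) = Γ(u+1) / (Γ(v+1) Γ(u-v+1))`. -/
noncomputable def genBinom (u v : ℝ) : ℝ :=
  Real.Gamma (u + 1) / (Real.Gamma (v + 1) * Real.Gamma (u - v + 1))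

/-- Jacobi polynomial `P_n^{(a,b)}(x)`. -/
noncomputable def jacobiP (n : ℕ) (a b x : ℝ) : ℝ :=
  ∑ k ∈ Finset.range (n + 1),
    genBinom ((n : ℝ) + a) ((n : ℝ) - (k : ℝ)) * genBinom ((n : ℝ) + b) (k : ℝ) *
      ((x - 1) / 2) ^ k * ((x + 1) / 2) ^ (n - k)

/-- `F_n^{(α,β),δ}(t)`. -/
noncomputable def FJ (n : ℕ) (α β δ t : ℝ) : ℝ :=
  ∫ θ in (0:ℝ)..t, (t - θ) ^ δ * jacobiP n (α - 1/2) (β - 1/2) (Real.cos θ) *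
    (Real.sin (θ / 2)) ^ (2 * α) * (Real.cos (θ / 2)) ^ (2 * β)


namespace JPos

/-! ### The algebra of Jacobi polynomials -/

noncomputable def e (a : ℝ) (i : ℕ) (z : ℝ) : ℝ :=
  z ^ i / ((i.factorial : ℝ) * Real.Gamma (i + a + 1))

noncomputable def S (n : ℕ) (a b z c : ℝ) : ℝ :=
  ∑ p ∈ Finset.HasAntidiagonal.antidiagonal n, e a p.1 z * e b p.2 c

lemma S_swap (n : ℕ) (a b z c : ℝ) : S n a b z c = S n b a c z := by
  unfold S
  rw [← Finset.Nat.sum_antidiagonal_swap]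
  exact Finset.sum_congr rfl fun p _ => by simp [mul_comm]

lemma e_shift (a : ℝ) (i : ℕ) (z : ℝ) : z * e (a + 1) i z = ((i + 1 : ℕ) : ℝ) * e a (i + 1) z := by
  unfold e
  have h1 : ((i.factorial : ℕ) : ℝ) ≠ 0 := by positivity
  rw [Nat.factorial_succ]
  have : ((i : ℝ) + (a + 1) + 1) = (((i + 1 : ℕ) : ℝ) + a + 1) := by push_cast; ring
  rw [this, pow_succ]
  push_cast
  have h2 : (i : ℝ) + 1 ≠ 0 := by positivity
  by_cases h3 : Real.Gamma ((i : ℝ) + 1 + a + 1) = 0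
  · simp [h3]
  · field_simp

lemma e_mul (a : ℝ) (ha : -1 < a) (i : ℕ) (z : ℝ) :
    z * e a i z = ((i + 1 : ℕ) : ℝ) * (((i + 1 : ℕ) : ℝ) + a) * e a (i + 1) z := by
  unfold e
  have h1 : ((i.factorial : ℕ) : ℝ) ≠ 0 := by positivity
  have hp : (0 : ℝ) < i + a + 1 := by
    have : (0 : ℝ) ≤ i := by positivity
    linarith
  rw [Nat.factorial_succ]
  have : (((i + 1 : ℕ) : ℝ) + a + 1) = ((i : ℝ) + a + 1) + 1 := by push_cast; ring
  rw [this, Real.Gamma_add_one hp.ne', pow_succ]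
  have h3 := (Real.Gamma_pos_of_pos hp).ne'
  push_cast
  have h2 : (i : ℝ) + 1 ≠ 0 := by positivity
  have h4 : (i : ℝ) + 1 + a ≠ 0 := by intro h; linarith
  have h5 := hp.ne'
  rw [show (i : ℝ) + 1 + a = i + a + 1 by ring]
  field_simp

lemma S_z1 (n : ℕ) (a b z c : ℝ) : z * S n (a + 1) b z c =
    ∑ p ∈ Finset.HasAntidiagonal.antidiagonal (n + 1), (p.1 : ℝ) * (e a p.1 z * e b p.2 c) := by
  rw [Finset.Nat.sum_antidiagonal_succ]
  simp only [Nat.cast_zero, zero_mul, zero_add]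
  unfold S
  rw [Finset.mul_sum]
  refine Finset.sum_congr rfl fun p _ => ?_
  rw [← mul_assoc, e_shift]; ring

lemma S_z (n : ℕ) (a b z c : ℝ) (ha : -1 < a) : z * S n a b z c =
    ∑ p ∈ Finset.HasAntidiagonal.antidiagonal (n + 1), (p.1 : ℝ) * (p.1 + a) * (e a p.1 z * e b p.2 c) := by
  rw [Finset.Nat.sum_antidiagonal_succ]
  simp only [Nat.cast_zero, zero_mul, zero_add]
  unfold S
  rw [Finset.mul_sum]
  refine Finset.sum_congr rfl fun p _ => ?_
  rw [← mul_assoc, e_mul a ha]; ring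

lemma S_c (n : ℕ) (a b z c : ℝ) (hb : -1 < b) : c * S n a b z c =
    ∑ p ∈ Finset.HasAntidiagonal.antidiagonal (n + 1), (p.2 : ℝ) * (p.2 + b) * (e a p.1 z * e b p.2 c) := by
  rw [S_swap, S_z _ _ _ _ _ hb, ← Finset.Nat.sum_antidiagonal_swap]
  exact Finset.sum_congr rfl fun p _ => by simp [mul_comm]

lemma S_rec (n : ℕ) (a b z c : ℝ) (ha : -1 < a) (hb : -1 < b) :
    (2 * n + a + b + 2) * (z * S n (a + 1) b z c) =
      (n + 1) * ((n + b + 1) * S (n + 1) a b z c) - (c * S n a b z c - z * S n a b z c) := by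
  rw [S_z1, S_z _ _ _ _ _ ha, S_c _ _ _ _ _ hb]
  unfold S
  simp only [Finset.mul_sum]
  rw [← Finset.sum_sub_distrib, ← Finset.sum_sub_distrib]
  refine Finset.sum_congr rfl fun p hp => ?_
  have h : (p.1 : ℝ) + p.2 = n + 1 := by
    have := Finset.HasAntidiagonal.mem_antidiagonal.1 hp
    exact_mod_cast this
  have h2 : (p.2 : ℝ) = n + 1 - p.1 := by linarith
  rw [h2]
  ring

noncomputable def Q (n : ℕ) (a b z c : ℝ) : ℝ :=
  Real.Gamma (n + a + 1) * Real.Gamma (n + b + 1) * S n a b z c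

lemma Q_swap (n : ℕ) (a b z c : ℝ) : Q n a b z c = Q n b a c z := by
  unfold Q; rw [S_swap]; ring

lemma Q_rec (n : ℕ) (a b z c : ℝ) (ha : -1 < a) (hb : -1 < b) :
    (2 * n + a + b + 2) * (z * Q n (a + 1) b z c) =
      (n + 1) * Q (n + 1) a b z c - (n + a + 1) * ((c - z) * Q n a b z c) := by
  have h := S_rec n a b z c ha hb
  have hn : (0 : ℝ) ≤ n := by positivity
  have g1 : Real.Gamma ((n : ℝ) + (a + 1) + 1) = (n + a + 1) * Real.Gamma (n + a + 1) := by
    rw [← Real.Gamma_add_one (by linarith)]; congr 1; ring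
  have g2 : Real.Gamma (((n + 1 : ℕ) : ℝ) + a + 1) = (n + a + 1) * Real.Gamma (n + a + 1) := by
    rw [← Real.Gamma_add_one (by linarith)]; congr 1; push_cast; ring
  have g3 : Real.Gamma (((n + 1 : ℕ) : ℝ) + b + 1) = (n + b + 1) * Real.Gamma (n + b + 1) := by
    rw [← Real.Gamma_add_one (by linarith)]; congr 1; push_cast; ring
  unfold Q
  rw [g1, g2, g3]
  linear_combination ((n + a + 1) * Real.Gamma (n + a + 1) * Real.Gamma (n + b + 1)) * h

lemma Q_rec2 (n : ℕ) (a b z c : ℝ) (ha : -1 < a) (hb : -1 < b) :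
    (2 * n + a + b + 2) * (c * Q n a (b + 1) z c) =
      (n + 1) * Q (n + 1) a b z c + (n + b + 1) * ((c - z) * Q n a b z c) := by
  have h := Q_rec n b a c z hb ha
  rw [Q_swap n a, Q_swap (n + 1) a, Q_swap n a]
  linear_combination h

lemma jacobi_eq (n : ℕ) (a b x : ℝ) :
    jacobiP n a b x = Q n a b ((x - 1) / 2) ((x + 1) / 2) := by
  unfold jacobiP Q S
  rw [Finset.Nat.sum_antidiagonal_eq_sum_range_succ_mk, Finset.mul_sum]
  refine Finset.sum_congr rfl fun k hk => ?_
  have hk' : k ≤ n := by simpa [Nat.lt_succ_iff] using hk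
  unfold genBinom e
  rw [← Nat.cast_sub hk', Real.Gamma_nat_eq_factorial, Real.Gamma_nat_eq_factorial]
  rw [Nat.cast_sub hk']
  rw [show (n : ℝ) + a - (n - k) + 1 = k + a + 1 by ring,
    show (n : ℝ) + b - k + 1 = n - k + b + 1 by ring]
  simp only [div_eq_mul_inv, mul_inv]
  ring

lemma fact_half (i : ℕ) : (i.factorial : ℝ) * Real.Gamma (i + (-1/2) + 1) * 4 ^ i
    = ((2 * i).factorial : ℝ) * √π := by
  induction i with
  | zero =>
    simp only [Nat.cast_zero, zero_add, Nat.factorial, pow_zero]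
    rw [show (-1/2 + 1 : ℝ) = 1/2 by norm_num, Real.Gamma_one_half_eq]; simp
  | succ i ih =>
    rw [show (((i + 1 : ℕ) : ℝ) + (-1/2) + 1) = (i + (-1/2) + 1) + 1 by push_cast; ring,
      Real.Gamma_add_one (by have : (0:ℝ) ≤ i := by positivity
                             linarith)]
    rw [show 2 * (i + 1) = 2 * i + 1 + 1 by ring, Nat.factorial_succ, Nat.factorial_succ,
      Nat.factorial_succ, pow_succ]
    push_cast
    linear_combination ((i + 1) * (i + (-1/2) + 1) * 4) * ih

lemma e_half (i : ℕ) (z : ℝ) : e (-1/2) i z = z ^ i * 4 ^ i / (((2 * i).factorial : ℝ) * √π) := by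
  unfold e
  rw [← fact_half]
  have h4 : (4 : ℝ) ^ i ≠ 0 := by positivity
  rw [mul_div_mul_right _ _ h4]

lemma sum_even_odd {M : Type*} [AddCommMonoid M] (F : ℕ → M) (n : ℕ) :
    ∑ k ∈ Finset.range (2 * n + 1), F k =
      ∑ i ∈ Finset.range (n + 1), F (2 * i) + ∑ i ∈ Finset.range n, F (2 * i + 1) := by
  induction n with
  | zero => simp
  | succ n ih =>
    rw [show 2 * (n + 1) + 1 = 2 * n + 1 + 1 + 1 by ring, Finset.sum_range_succ,
      Finset.sum_range_succ, ih, Finset.sum_range_succ _ (n + 1),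
      Finset.sum_range_succ (fun i => F (2 * i + 1)) n,
      show 2 * (n + 1) = 2 * n + 1 + 1 by ring]
    rw [add_assoc, add_comm (F (2 * n + 1)), add_add_add_comm]

lemma cos_expand (n : ℕ) (φ : ℝ) : Real.cos (2 * n * φ) =
    ∑ i ∈ Finset.range (n + 1), ((2 * n).choose (2 * i) : ℝ) *
      ((-(Real.sin φ) ^ 2) ^ i * ((Real.cos φ) ^ 2) ^ (n - i)) := by
  have h := Complex.cos_add_sin_mul_I_pow (2 * n) (φ : ℂ)
  have h2 := congrArg Complex.re h
  have h3 : (Complex.cos ((2 * n : ℕ) * (φ : ℂ)) + Complex.sin ((2 * n : ℕ) * (φ : ℂ)) * Complex.I).re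
      = Real.cos (2 * n * φ) := by
    have : ((2 * n : ℕ) * (φ : ℂ)) = ((2 * n * φ : ℝ) : ℂ) := by push_cast; ring
    rw [this, ← Complex.ofReal_cos, ← Complex.ofReal_sin]
    simp [-Complex.ofReal_sin, -Complex.ofReal_cos, -Complex.ofReal_mul]
  rw [h3, add_comm, add_pow, sum_even_odd, Complex.add_re, Complex.re_sum, Complex.re_sum] at h2
  rw [← h2, ← Complex.ofReal_cos, ← Complex.ofReal_sin]
  have hodd : ∑ i ∈ Finset.range n, ((((Real.sin φ : ℝ) : ℂ) * Complex.I) ^ (2 * i + 1) *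
      ((Real.cos φ : ℝ) : ℂ) ^ (2 * n - (2 * i + 1)) * ((2 * n).choose (2 * i + 1) : ℂ)).re = 0 := by
    refine Finset.sum_eq_zero fun i _ => ?_
    have : (((Real.sin φ : ℝ) : ℂ) * Complex.I) ^ (2 * i + 1) *
      ((Real.cos φ : ℝ) : ℂ) ^ (2 * n - (2 * i + 1)) * ((2 * n).choose (2 * i + 1) : ℂ)
      = (((Real.sin φ) ^ (2 * i + 1) * (-1) ^ i * (Real.cos φ) ^ (2 * n - (2 * i + 1)) *
        ((2 * n).choose (2 * i + 1) : ℝ) : ℝ) : ℂ) * Complex.I := by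
      rw [mul_pow, pow_succ Complex.I, pow_mul Complex.I, Complex.I_sq]
      push_cast; ring
    rw [this, Complex.re_ofReal_mul, Complex.I_re, mul_zero]
  rw [hodd, add_zero]
  refine Finset.sum_congr rfl fun i hi => ?_
  have : (((Real.sin φ : ℝ) : ℂ) * Complex.I) ^ (2 * i) *
      ((Real.cos φ : ℝ) : ℂ) ^ (2 * n - (2 * i)) * ((2 * n).choose (2 * i) : ℂ)
      = (((Real.sin φ) ^ (2 * i) * (-1) ^ i * (Real.cos φ) ^ (2 * n - (2 * i)) *
        ((2 * n).choose (2 * i) : ℝ) : ℝ) : ℂ) := by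
      rw [mul_pow, pow_mul Complex.I, Complex.I_sq]
      push_cast; ring
  rw [this, Complex.ofReal_re, neg_pow (Real.sin φ ^ 2), ← pow_mul, ← pow_mul, Nat.mul_sub]
  ring

noncomputable def cc (n : ℕ) : ℝ :=
  Real.Gamma (n + (-1/2) + 1) ^ 2 * 4 ^ n / (π * ((2 * n).factorial : ℝ))

lemma cc_pos (n : ℕ) : 0 < cc n := by
  unfold cc
  have : 0 < Real.Gamma ((n : ℝ) + (-1/2) + 1) := Real.Gamma_pos_of_pos (by
    have : (0:ℝ) ≤ n := by positivity
    linarith)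
  have := Real.pi_pos
  positivity

lemma cc_rec (n : ℕ) : (n + 1/2) * cc n = (n + 1) * cc (n + 1) := by
  unfold cc
  have h0 : Real.Gamma (((n + 1 : ℕ) : ℝ) + (-1/2) + 1) =
      (n + (-1/2) + 1) * Real.Gamma (n + (-1/2) + 1) := by
    rw [← Real.Gamma_add_one (by have : (0:ℝ) ≤ n := by positivity
                                 linarith)]
    congr 1; push_cast; ring
  rw [h0, show 2 * (n + 1) = 2 * n + 1 + 1 by ring, Nat.factorial_succ, Nat.factorial_succ,
    pow_succ 4]
  generalize Real.Gamma ((n : ℝ) + (-1/2) + 1) = G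
  have h1 : ((2 * n).factorial : ℝ) ≠ 0 := by positivity
  have h2 := Real.pi_pos.ne'
  have h3 : (2 * (n : ℝ) + 1) ≠ 0 := by positivity
  have h4 : (2 * (n : ℝ) + 1 + 1) ≠ 0 := by positivity
  push_cast
  field_simp
  ring

lemma Q_base (n : ℕ) (φ : ℝ) :
    Q n (-1/2) (-1/2) (-(Real.sin φ) ^ 2) ((Real.cos φ) ^ 2) = cc n * Real.cos (2 * n * φ) := by
  rw [cos_expand]
  unfold Q S cc
  rw [Finset.Nat.sum_antidiagonal_eq_sum_range_succ_mk, Finset.mul_sum, Finset.mul_sum]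
  refine Finset.sum_congr rfl fun k hk => ?_
  have hk' : k ≤ n := by simpa [Nat.lt_succ_iff] using hk
  simp only [e_half]
  rw [Nat.cast_choose ℝ (by omega : 2 * k ≤ 2 * n), ← Nat.mul_sub]
  have h1 : ((2 * n).factorial : ℝ) ≠ 0 := by positivity
  have h2 : ((2 * k).factorial : ℝ) ≠ 0 := by positivity
  have h3 : ((2 * (n - k)).factorial : ℝ) ≠ 0 := by positivity
  have h4 := Real.pi_pos.ne'
  have h5 : √π ≠ 0 := by have := Real.pi_pos; positivity
  have h6 : √π * √π = π := Real.mul_self_sqrt Real.pi_pos.le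
  have h7 : (4 : ℝ) ^ n = 4 ^ k * 4 ^ (n - k) := by rw [← pow_add]; congr 1; omega
  rw [h7]
  generalize Real.Gamma ((n : ℝ) + (-1/2) + 1) = G
  field_simp
  rw [Real.sq_sqrt Real.pi_pos.le]
  ring

/-! ### The integration operator -/

noncomputable def J : Module.End ℝ C(ℝ, ℝ) where
  toFun y := ⟨fun t => ∫ s in (0:ℝ)..t, y s,
    intervalIntegral.continuous_primitive (fun a b => y.continuous.intervalIntegrable a b) 0⟩
  map_add' x y := by
    ext t
    exact intervalIntegral.integral_add (x.continuous.intervalIntegrable _ _)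
      (y.continuous.intervalIntegrable _ _)
  map_smul' r y := by
    ext t
    exact intervalIntegral.integral_smul r y

lemma J_apply (y : C(ℝ, ℝ)) (t : ℝ) : J y t = ∫ s in (0:ℝ)..t, y s := rfl

lemma J_zero (y : C(ℝ, ℝ)) : J y 0 = 0 := by rw [J_apply]; simp

lemma J_deriv (y : C(ℝ, ℝ)) (t : ℝ) : HasDerivAt (fun u => J y u) (y t) t :=
  intervalIntegral.integral_hasDerivAt_right (y.continuous.intervalIntegrable _ _)
    (y.continuous.stronglyMeasurableAtFilter _ _) y.continuous.continuousAt

/-- Fundamental theorem: a function vanishing at zero is the primitive of its derivative. -/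
lemma eq_J (x y : C(ℝ, ℝ)) (h0 : x 0 = 0) (h : ∀ t, HasDerivAt x (y t) t) : x = J y := by
  ext t
  rw [J_apply, intervalIntegral.integral_eq_sub_of_hasDerivAt (fun s _ => h s)
    (y.continuous.intervalIntegrable _ _), h0, sub_zero]

lemma A_inj (k : ℝ) (y : C(ℝ, ℝ)) (h : y + k ^ 2 • J (J y) = 0) : y = 0 := by
  have h' : ∀ t, y t + k ^ 2 * J (J y) t = 0 := fun t => by
    have := congrArg (fun f : C(ℝ, ℝ) => f t) h
    simpa using this
  have hd : ∀ t, HasDerivAt (fun u => J y u ^ 2 + k ^ 2 * J (J y) u ^ 2) 0 t := fun t => by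
    have h1 := ((J_deriv y t).pow 2).add (((J_deriv (J y) t).pow 2).const_mul (k ^ 2))
    refine h1.congr_deriv ?_
    push_cast
    linear_combination 2 * J y t * h' t
  have hc : ∀ t, J y t ^ 2 + k ^ 2 * J (J y) t ^ 2 = 0 := fun t => by
    have := is_const_of_deriv_eq_zero (fun t => (hd t).differentiableAt)
      (fun t => (hd t).deriv) t 0
    simpa [J_zero] using this
  have hJ : ∀ t, J y t = 0 := fun t => by
    have h1 := hc t
    have h2 := sq_nonneg (J y t)
    have h3 : 0 ≤ k ^ 2 * J (J y) t ^ 2 := by positivity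
    exact pow_eq_zero_iff (two_ne_zero) |>.1 (by linarith)
  ext t
  have := J_deriv y t
  rw [show (fun u => J y u) = fun _ => (0:ℝ) from funext hJ] at this
  exact this.unique (hasDerivAt_const t (0:ℝ))

open Polynomial in
noncomputable def q (n : ℕ) : ℕ → ℝ[X]
  | 0 => 1 + C ((n:ℝ) ^ 2) * X ^ 2
  | α + 1 => q n α * (1 + C (((n + α + 1 : ℕ) : ℝ) ^ 2) * X ^ 2)

open Polynomial in
lemma q_succ (α : ℕ) : ∀ n : ℕ, q n (α + 1) = q (n + 1) α * (1 + C ((n:ℝ) ^ 2) * X ^ 2) := by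
  induction α with
  | zero => intro n; simp only [q]; rw [mul_comm]
  | succ α ih =>
    intro n
    rw [q, ih, q, show n + (α + 1) + 1 = n + 1 + α + 1 by ring]
    ring

open Polynomial in
noncomputable def ev (p : ℝ[X]) (y : C(ℝ, ℝ)) : C(ℝ, ℝ) := aeval J p y

open Polynomial in
lemma ev_mul (p r : ℝ[X]) (y : C(ℝ, ℝ)) : ev (p * r) y = ev p (ev r y) := by
  simp [ev]

open Polynomial in
lemma ev_add (p : ℝ[X]) (y z : C(ℝ, ℝ)) : ev p (y + z) = ev p y + ev p z := by
  simp [ev]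

open Polynomial in
lemma ev_sub (p : ℝ[X]) (y z : C(ℝ, ℝ)) : ev p (y - z) = ev p y - ev p z := by
  simp [ev]

open Polynomial in
lemma ev_smul (p : ℝ[X]) (r : ℝ) (y : C(ℝ, ℝ)) : ev p (r • y) = r • ev p y := by
  simp [ev]

open Polynomial in
lemma ev_comm (p r : ℝ[X]) (y : C(ℝ, ℝ)) : ev p (ev r y) = ev r (ev p y) := by
  rw [← ev_mul, mul_comm, ev_mul]

open Polynomial in
lemma ev_A (k : ℝ) (y : C(ℝ, ℝ)) : ev (1 + C (k ^ 2) * X ^ 2) y = y + k ^ 2 • J (J y) := by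
  simp [ev, pow_two, Algebra.smul_def, mul_assoc]

open Polynomial in
lemma ev_X (m : ℕ) (y : C(ℝ, ℝ)) : ev (X ^ m) y = (J ^ m) y := by
  simp [ev]

open Polynomial in
lemma ev_q_inj (n α : ℕ) : ∀ y : C(ℝ, ℝ), ev (q n α) y = 0 → y = 0 := by
  induction α with
  | zero => intro y h; rw [q, ev_A] at h; exact A_inj _ y h
  | succ α ih =>
    intro y h
    rw [q, ev_mul] at h
    have := ih _ h
    rw [ev_A] at this
    exact A_inj _ y this

/-! ### Positivity -/

structure Good (x : C(ℝ, ℝ)) : Prop where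
  nn : ∀ t, 0 ≤ t → 0 ≤ x t
  pos : ∃ ε > 0, ∀ t, 0 < t → t < ε → 0 < x t

lemma integral_pos_aux (w : ℝ → ℝ) (hw : Continuous w) (t s : ℝ) (hs : 0 < s) (hst : s < t)
    (hnn : ∀ u, 0 ≤ u → u ≤ t → 0 ≤ w u) (hp : 0 < w s) : 0 < ∫ u in (0:ℝ)..t, w u := by
  refine intervalIntegral.integral_pos (hs.trans hst) hw.continuousOn
    (fun u hu => hnn u hu.1.le hu.2) ⟨s, ⟨hs.le, hst.le⟩, hp⟩

lemma J_pos (x : C(ℝ, ℝ)) (hx : Good x) (t : ℝ) (ht : 0 < t) : 0 < J x t := by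
  obtain ⟨ε, hε, h⟩ := hx.pos
  have hm : 0 < min ε t := lt_min hε ht
  refine integral_pos_aux _ x.continuous t (min ε t / 2) (by positivity) ?_
    (fun u hu _ => hx.nn u hu) (h _ (by positivity) ?_)
  · linarith [min_le_right ε t]
  · linarith [min_le_left ε t]

lemma Good.of_pos (x : C(ℝ, ℝ)) (h0 : 0 ≤ x 0) (h : ∀ t, 0 < t → 0 < x t) : Good x where
  nn t ht := by
    rcases ht.eq_or_lt with rfl | ht
    · exact h0
    · exact (h t ht).le
  pos := ⟨1, one_pos, fun t ht _ => h t ht⟩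

lemma Good.J {x : C(ℝ, ℝ)} (hx : Good x) : Good (J x) :=
  Good.of_pos _ (J_zero x).ge (J_pos x hx)

/-- Convolution with `(1 - cos (k t)) / k ^ 2`. -/
lemma exists_T (k : ℝ) (hk : 0 < k) (x : C(ℝ, ℝ)) (hx : Good x) :
    ∃ y : C(ℝ, ℝ), y + k ^ 2 • J (J y) = J (J (J x)) ∧ (y 0 = 0) ∧ ∀ t, 0 < t → 0 < y t := by
  let co : C(ℝ, ℝ) := ⟨fun s => Real.cos (k * s), by fun_prop⟩
  let si : C(ℝ, ℝ) := ⟨fun s => Real.sin (k * s), by fun_prop⟩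
  have hco : ∀ t, HasDerivAt (fun u => Real.cos (k * u)) (-Real.sin (k * t) * k) t := fun t => by
    simpa using ((hasDerivAt_id t).const_mul k).cos
  have hsi : ∀ t, HasDerivAt (fun u => Real.sin (k * u)) (Real.cos (k * t) * k) t := fun t => by
    simpa using ((hasDerivAt_id t).const_mul k).sin
  let y2 : C(ℝ, ℝ) := co * JPos.J (co * x) + si * JPos.J (si * x)
  let y1 : C(ℝ, ℝ) := (1 / k) • (si * JPos.J (co * x) - co * JPos.J (si * x))
  let y : C(ℝ, ℝ) := (1 / k ^ 2) • (JPos.J x - y2)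
  have e1 : y1 = JPos.J y2 := by
    refine eq_J _ _ ?_ fun t => ?_
    · simp [y1, J_zero]
    · have := (((hsi t).mul (J_deriv (co * x) t)).sub
        ((hco t).mul (J_deriv (si * x) t))).const_mul (1 / k)
      refine this.congr_deriv ?_
      simp only [y2, co, si, ContinuousMap.add_apply, ContinuousMap.mul_apply, ContinuousMap.coe_mk]
      field_simp
      ring
  have e2 : y = JPos.J y1 := by
    refine eq_J _ _ ?_ fun t => ?_
    · simp [y, y2, J_zero]
    · have := ((J_deriv x t).sub (((hco t).mul (J_deriv (co * x) t)).add
        ((hsi t).mul (J_deriv (si * x) t)))).const_mul (1 / k ^ 2)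
      refine this.congr_deriv ?_
      simp only [y1, co, si, ContinuousMap.sub_apply, ContinuousMap.mul_apply, ContinuousMap.coe_mk,
        ContinuousMap.smul_apply, smul_eq_mul]
      have := Real.sin_sq_add_cos_sq (k * t)
      field_simp
      linear_combination (-x t) * this
  have e3 : y2 + k ^ 2 • y = JPos.J x := by
    simp only [y, smul_smul]
    rw [mul_one_div_cancel (by positivity), one_smul]; abel
  refine ⟨y, ?_, ?_, ?_⟩
  · rw [← e3]
    simp only [map_add, map_smul]
    rw [← e1, ← e2]
  · simp [y, y2, J_zero]
  · intro t ht
    have hy : y t = ∫ s in (0:ℝ)..t, (1 - Real.cos (k * (t - s))) / k ^ 2 * x s := by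
      have : y t = (1 / k ^ 2) * ((∫ s in (0:ℝ)..t, x s) -
          (Real.cos (k * t) * (∫ s in (0:ℝ)..t, Real.cos (k * s) * x s) +
            Real.sin (k * t) * (∫ s in (0:ℝ)..t, Real.sin (k * s) * x s))) := rfl
      have hxc := x.continuous
      rw [this, ← intervalIntegral.integral_const_mul, ← intervalIntegral.integral_const_mul,
        ← intervalIntegral.integral_add, ← intervalIntegral.integral_sub,
        ← intervalIntegral.integral_const_mul]
      · refine intervalIntegral.integral_congr fun s _ => ?_
        rw [mul_sub k t s, Real.cos_sub]; ring
      all_goals exact Continuous.intervalIntegrable (by fun_prop) _ _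
    obtain ⟨ε, hε, h⟩ := hx.pos
    have hm : 0 < min (min ε t) (1 / k) := lt_min (lt_min hε ht) (by positivity)
    set m := min (min ε t) (1 / k) with hmdef
    have m1 : m ≤ ε := (min_le_left _ _).trans (min_le_left _ _)
    have m2 : m ≤ t := (min_le_left _ _).trans (min_le_right _ _)
    have m3 : k * m ≤ 1 := by
      have : m ≤ 1 / k := min_le_right _ _
      calc k * m ≤ k * (1 / k) := by gcongr
        _ = 1 := by field_simp
    have key : ∃ s, 0 < s ∧ s < m ∧ Real.cos (k * (t - s)) < 1 := by
      by_contra hcon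
      push Not at hcon
      have c1 := le_antisymm (Real.cos_le_one _) (hcon (m / 2) (by positivity) (by linarith))
      have c2 := le_antisymm (Real.cos_le_one _) (hcon (m / 4) (by positivity) (by linarith))
      have s1 : Real.sin (k * (t - m / 2)) = 0 := by
        have := Real.sin_sq_add_cos_sq (k * (t - m / 2))
        rw [c1] at this; nlinarith
      have c3 : Real.cos (k * m / 4) = 1 := by
        rw [show k * m / 4 = k * (t - m / 4) - k * (t - m / 2) by ring, Real.cos_sub, c1, c2, s1]
        ring
      have hkm : 0 < k * m := by positivity
      have := (Real.cos_eq_one_iff_of_lt_of_lt (by linarith [Real.pi_gt_three])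
        (by linarith [Real.pi_gt_three])).1 c3
      linarith
    obtain ⟨s, hs0, hsm, hc⟩ := key
    rw [hy]
    have hxc := x.continuous
    refine integral_pos_aux _ (by fun_prop) t s hs0 (by linarith) (fun u hu _ => ?_) ?_
    · have := hx.nn u hu
      have := Real.cos_le_one (k * (t - u))
      have : 0 ≤ 1 - Real.cos (k * (t - u)) := by linarith
      positivity
    · have := h s hs0 (by linarith)
      have : 0 < 1 - Real.cos (k * (t - s)) := by linarith
      positivity

noncomputable def cosn (n : ℕ) : C(ℝ, ℝ) := ⟨fun s => Real.cos (n * s), by fun_prop⟩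

lemma cosn_A (n : ℕ) : cosn n + (n : ℝ) ^ 2 • J (J (cosn n)) = 1 := by
  have hco : ∀ t : ℝ, HasDerivAt (fun u => Real.cos (n * u)) (-Real.sin (n * t) * n) t := fun t => by
    simpa using ((hasDerivAt_id t).const_mul (n : ℝ)).cos
  have hsi : ∀ t : ℝ, HasDerivAt (fun u => Real.sin (n * u)) (Real.cos (n * t) * n) t := fun t => by
    simpa using ((hasDerivAt_id t).const_mul (n : ℝ)).sin
  let si : C(ℝ, ℝ) := ⟨fun s => Real.sin (n * s), by fun_prop⟩
  have e1 : si = J ((n : ℝ) • cosn n) := by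
    refine eq_J _ _ (by simp [si]) fun t => (hsi t).congr_deriv ?_
    simp [cosn, mul_comm]
  have e2 : 1 - cosn n = J ((n : ℝ) • si) := by
    refine eq_J _ _ (by simp [cosn]) fun t => ((hco t).const_sub 1).congr_deriv ?_
    simp [si, mul_comm]
  rw [e1] at e2
  simp only [map_smul, smul_smul] at e2
  rw [pow_two, ← e2]; abel

lemma one_good : Good 1 := ⟨fun _ _ => by simp, ⟨1, one_pos, fun _ _ _ => by simp⟩⟩

lemma JJcos (n : ℕ) (hn : n ≠ 0) (t : ℝ) :
    J (J (cosn n)) t = (1 - Real.cos (n * t)) / (n : ℝ) ^ 2 := by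
  have := congrArg (fun f : C(ℝ, ℝ) => f t) (cosn_A n)
  simp only [ContinuousMap.add_apply, ContinuousMap.smul_apply, smul_eq_mul,
    ContinuousMap.one_apply] at this
  have hn' : (n : ℝ) ≠ 0 := by exact_mod_cast hn
  rw [eq_div_iff (by positivity)]
  have h2 : cosn n t = Real.cos (n * t) := rfl
  rw [← h2]; linarith

lemma cosn_good (n : ℕ) : Good (J (J (cosn n))) := by
  rcases Nat.eq_zero_or_pos n with rfl | hn
  · have : cosn 0 = 1 := by ext; simp [cosn]
    rw [this]; exact one_good.J.J
  · have hk : (0 : ℝ) < n := by exact_mod_cast hn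
    constructor
    · intro t _
      rw [JJcos n hn.ne']
      have : 0 ≤ 1 - Real.cos (n * t) := by linarith [Real.cos_le_one (n * t)]
      positivity
    · refine ⟨1 / n, by positivity, fun t ht htn => ?_⟩
      rw [JJcos n hn.ne']
      have h1 : (n : ℝ) * t < 1 := by rwa [lt_div_iff₀' hk] at htn
      have h0 : 0 < (n : ℝ) * t := by positivity
      have : Real.cos (n * t) < 1 := by
        refine lt_of_le_of_ne (Real.cos_le_one _) fun h => ?_
        have := (Real.cos_eq_one_iff_of_lt_of_lt (by linarith [Real.pi_gt_three])
          (by linarith [Real.pi_gt_three])).1 h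
        linarith
      have : 0 < 1 - Real.cos (n * t) := by linarith
      positivity

lemma exists_G (α : ℕ) : ∀ n : ℕ, ∃ G : C(ℝ, ℝ), ev (q n α) G = (J ^ (3 * α + 2)) 1 ∧ Good G ∧
    (0 < α → ∀ t, 0 < t → 0 < G t) := by
  induction α with
  | zero =>
    intro n
    refine ⟨J (J (cosn n)), ?_, cosn_good n, fun h => absurd h (lt_irrefl _)⟩
    rw [q, ev_A, ← cosn_A n]
    simp [pow_two]
  | succ α ih =>
    intro n
    obtain ⟨G, h1, h2, -⟩ := ih (n + 1)
    have key : ∃ y : C(ℝ, ℝ), y + (n : ℝ) ^ 2 • J (J y) = J (J (J G)) ∧ (y 0 = 0) ∧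
        ∀ t, 0 < t → 0 < y t := by
      rcases Nat.eq_zero_or_pos n with rfl | hn
      · exact ⟨J (J (J G)), by simp, J_zero _, J_pos _ h2.J.J⟩
      · exact exists_T n (by exact_mod_cast hn) G h2
    obtain ⟨y, hy, hy0, hyp⟩ := key
    refine ⟨y, ?_, Good.of_pos _ hy0.ge hyp, fun _ => hyp⟩
    rw [q_succ, ev_mul, ev_A, hy]
    have : J (J (J G)) = ev (Polynomial.X ^ 3) G := by rw [ev_X]; simp [pow_succ]
    rw [this, ev_comm, h1, ev_X, ← Module.End.mul_apply, ← pow_add]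
    congr 2; ring

/-! ### The weighted Jacobi polynomials -/

lemma jacobi_cos (n : ℕ) (a b θ : ℝ) : jacobiP n a b (Real.cos θ) =
    Q n a b (-(Real.sin (θ / 2)) ^ 2) ((Real.cos (θ / 2)) ^ 2) := by
  rw [jacobi_eq]
  have h1 : Real.cos θ = 2 * Real.cos (θ / 2) ^ 2 - 1 := by
    rw [← Real.cos_two_mul]; congr 1; ring
  have h2 := Real.sin_sq_add_cos_sq (θ / 2)
  congr 1
  · rw [h1]; linarith
  · rw [h1]; ring

noncomputable def f (n α β : ℕ) : C(ℝ, ℝ) :=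
  ⟨fun θ => jacobiP n ((α : ℝ) - 1/2) ((β : ℝ) - 1/2) (Real.cos θ) *
    (Real.sin (θ / 2)) ^ (2 * α) * (Real.cos (θ / 2)) ^ (2 * β), by
      unfold jacobiP; fun_prop⟩

lemma f_apply (n α β : ℕ) (θ : ℝ) : f n α β θ =
    Q n ((α : ℝ) - 1/2) ((β : ℝ) - 1/2) (-(Real.sin (θ / 2)) ^ 2) ((Real.cos (θ / 2)) ^ 2) *
    (Real.sin (θ / 2)) ^ (2 * α) * (Real.cos (θ / 2)) ^ (2 * β) := by
  rw [← jacobi_cos]; rfl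

lemma half_gt (α : ℕ) : -1 < (α : ℝ) - 1/2 := by
  have : (0:ℝ) ≤ α := by positivity
  linarith

lemma f_rec_α (n α β : ℕ) : (2 * n + α + β + 1 : ℝ) • f n (α + 1) β =
    (n + α + 1/2 : ℝ) • f n α β - (n + 1 : ℝ) • f (n + 1) α β := by
  ext θ
  simp only [ContinuousMap.sub_apply, ContinuousMap.smul_apply, smul_eq_mul, f_apply]
  have h := Q_rec n ((α : ℝ) - 1/2) ((β : ℝ) - 1/2) (-(Real.sin (θ / 2)) ^ 2)
    ((Real.cos (θ / 2)) ^ 2) (half_gt α) (half_gt β)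
  have h1 := Real.sin_sq_add_cos_sq (θ / 2)
  have h2 : Real.cos (θ / 2) ^ 2 - -(Real.sin (θ / 2)) ^ 2 = 1 := by linarith
  rw [h2] at h
  rw [show ((α + 1 : ℕ) : ℝ) - 1/2 = (α : ℝ) - 1/2 + 1 by push_cast; ring,
    show 2 * (α + 1) = 2 * α + 2 by ring, pow_add _ (2 * α) 2]
  linear_combination (-(Real.sin (θ / 2)) ^ (2 * α) * (Real.cos (θ / 2)) ^ (2 * β)) * h

lemma f_rec_β (n α β : ℕ) : (2 * n + α + β + 1 : ℝ) • f n α (β + 1) =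
    (n + β + 1/2 : ℝ) • f n α β + (n + 1 : ℝ) • f (n + 1) α β := by
  ext θ
  simp only [ContinuousMap.add_apply, ContinuousMap.smul_apply, smul_eq_mul, f_apply]
  have h := Q_rec2 n ((α : ℝ) - 1/2) ((β : ℝ) - 1/2) (-(Real.sin (θ / 2)) ^ 2)
    ((Real.cos (θ / 2)) ^ 2) (half_gt α) (half_gt β)
  have h1 := Real.sin_sq_add_cos_sq (θ / 2)
  have h2 : Real.cos (θ / 2) ^ 2 - -(Real.sin (θ / 2)) ^ 2 = 1 := by linarith
  rw [h2] at h
  rw [show ((β + 1 : ℕ) : ℝ) - 1/2 = (β : ℝ) - 1/2 + 1 by push_cast; ring,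
    show 2 * (β + 1) = 2 * β + 2 by ring, pow_add _ (2 * β) 2]
  linear_combination ((Real.sin (θ / 2)) ^ (2 * α) * (Real.cos (θ / 2)) ^ (2 * β)) * h

lemma f_base (n : ℕ) : f n 0 0 = cc n • cosn n := by
  ext θ
  rw [f_apply]
  have := Q_base n (θ / 2)
  simp only [Nat.cast_zero, mul_zero, pow_zero, mul_one, ContinuousMap.smul_apply, smul_eq_mul]
  rw [show (0 : ℝ) - 1/2 = -1/2 by norm_num, this]
  simp only [cosn, ContinuousMap.coe_mk]
  congr 2; ring

noncomputable def c (n : ℕ) : ℕ → ℝ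
  | 0 => cc n
  | α + 1 => (n + α + 1/2) * (α + 1) * c n α

lemma c_pos (n α : ℕ) : 0 < c n α := by
  induction α with
  | zero => exact cc_pos n
  | succ α ih => rw [c]; positivity

lemma c_rec (n α : ℕ) : (n + α + 1/2) * c n α = (n + 1) * c (n + 1) α := by
  induction α with
  | zero => simpa [c] using cc_rec n
  | succ α ih =>
    rw [c, c]; push_cast
    linear_combination ((n + α + 1 + 1/2) * (α + 1)) * ih

lemma f_alg (α : ℕ) : ∀ n : ℕ, ev (q n α) (f n α 0) = c n α • (J ^ (2 * α)) 1 := by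
  induction α with
  | zero =>
    intro n
    rw [f_base, q, ev_smul, ev_A, cosn_A]; simp [c]
  | succ α ih =>
    intro n
    have h0 : (2 * n + α + 1 : ℝ) ≠ 0 := by positivity
    have hr := f_rec_α n α 0
    simp only [Nat.cast_zero, add_zero] at hr
    have h1 : ev (q n (α + 1)) (f n α 0) = ev (1 + Polynomial.C (((n + α + 1 : ℕ) : ℝ) ^ 2) *
        Polynomial.X ^ 2) (c n α • (J ^ (2 * α)) 1) := by
      rw [q, mul_comm, ev_mul, ih]
    have h2 : ev (q n (α + 1)) (f (n + 1) α 0) = ev (1 + Polynomial.C ((n : ℝ) ^ 2) *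
        Polynomial.X ^ 2) (c (n + 1) α • (J ^ (2 * α)) 1) := by
      rw [q_succ, mul_comm, ev_mul, ih]
    rw [ev_A] at h1 h2
    have h3 := congrArg (ev (q n (α + 1))) hr
    rw [ev_sub, ev_smul, ev_smul, ev_smul, h1, h2] at h3
    have hJ : (J ^ (2 * (α + 1))) 1 = J (J ((J ^ (2 * α)) (1 : C(ℝ, ℝ)))) := by
      rw [show 2 * (α + 1) = 1 + (1 + 2 * α) by ring, pow_add, pow_add]; simp
    rw [hJ]
    generalize (J ^ (2 * α)) (1 : C(ℝ, ℝ)) = Z at *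
    refine smul_right_injective _ h0 ?_
    simp only
    rw [h3]
    have hc := c_rec n α
    simp only [map_smul, c]
    ext t
    simp only [ContinuousMap.add_apply, ContinuousMap.sub_apply, ContinuousMap.smul_apply,
      smul_eq_mul]
    push_cast
    linear_combination (Z t + n ^ 2 * J (J Z) t) * hc

lemma f_G (α n : ℕ) (G : C(ℝ, ℝ)) (hG : ev (q n α) G = (J ^ (3 * α + 2)) 1) :
    (J ^ (α + 2)) (f n α 0) = c n α • G := by
  rw [← sub_eq_zero]
  apply ev_q_inj n α
  rw [ev_sub, ev_smul, hG, ← ev_X, ev_comm, f_alg, ev_smul, ev_X, ← Module.End.mul_apply,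
    ← pow_add, show α + 2 + 2 * α = 3 * α + 2 by ring, sub_self]

lemma Y_pos_α (α n : ℕ) (hα : 0 < α) (t : ℝ) (ht : 0 < t) : 0 < (J ^ (α + 2)) (f n α 0) t := by
  obtain ⟨G, h1, -, h2⟩ := exists_G α n
  rw [f_G α n G h1]
  exact mul_pos (c_pos n α) (h2 hα t ht)

lemma Y_β (α β n : ℕ) (t : ℝ) : (2 * n + α + β + 1 : ℝ) * (J ^ (α + 2)) (f n α (β + 1)) t =
    (n + β + 1/2 : ℝ) * (J ^ (α + 2)) (f n α β) t +
      (n + 1 : ℝ) * (J ^ (α + 2)) (f (n + 1) α β) t := by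
  have := congrArg (fun y => (J ^ (α + 2)) y t) (f_rec_β n α β)
  simpa only [map_smul, map_add, ContinuousMap.add_apply, ContinuousMap.smul_apply,
      smul_eq_mul] using this

lemma Y_step (α β : ℕ) (t : ℝ) (h : ∀ n, 0 < (J ^ (α + 2)) (f n α β) t) (n : ℕ) :
    0 < (J ^ (α + 2)) (f n α (β + 1)) t := by
  have h1 := Y_β α β n t
  have h2 := h n
  have h3 := h (n + 1)
  have h4 : 0 < (2 * n + α + β + 1 : ℝ) * (J ^ (α + 2)) (f n α (β + 1)) t := by
    rw [h1]; positivity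
  exact pos_of_mul_pos_right h4 (by positivity)

lemma Y_01 (t : ℝ) (ht : 0 < t) (htπ : t ≤ π) (n : ℕ) : 0 < (J ^ (0 + 2)) (f n 0 (0 + 1)) t := by
  have h1 := Y_β 0 0 n t
  rw [f_base, f_base] at h1
  have hJ : ∀ k : ℕ, (J ^ (0 + 2)) (cc k • cosn k) t = cc k * J (J (cosn k)) t := fun k => by
    simp [pow_two]
  rw [hJ, hJ] at h1
  have g1 := (cosn_good n).nn t ht.le
  have g2 := (cosn_good (n + 1)).nn t ht.le
  have p1 := cc_pos n
  have p2 := cc_pos (n + 1)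
  have h4 : 0 < (2 * n + (0 : ℕ) + (0 : ℕ) + 1 : ℝ) * (J ^ (0 + 2)) (f n 0 (0 + 1)) t := by
    rw [h1]
    have : 0 < J (J (cosn n)) t ∨ 0 < J (J (cosn (n + 1))) t := by
      by_contra hcon
      push Not at hcon
      have z1 := le_antisymm hcon.1 g1
      have z2 := le_antisymm hcon.2 g2
      rw [JJcos (n + 1) (by omega), div_eq_zero_iff] at z2
      have c2 : Real.cos (((n + 1 : ℕ) : ℝ) * t) = 1 := by
        rcases z2 with h | h
        · linarith
        · exfalso; revert h; positivity
      have c1 : Real.cos ((n : ℝ) * t) = 1 := by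
        rcases Nat.eq_zero_or_pos n with rfl | hn
        · simp
        · rw [JJcos n hn.ne', div_eq_zero_iff] at z1
          rcases z1 with h | h
          · linarith
          · exfalso; revert h; positivity
      have s1 : Real.sin ((n : ℝ) * t) = 0 := by
        have := Real.sin_sq_add_cos_sq ((n : ℝ) * t)
        rw [c1] at this; nlinarith
      have c3 : Real.cos t = 1 := by
        rw [show t = ((n + 1 : ℕ) : ℝ) * t - n * t by push_cast; ring, Real.cos_sub, c1, c2, s1]
        ring
      have := (Real.cos_eq_one_iff_of_lt_of_lt (by linarith [Real.pi_gt_three])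
        (by linarith [Real.pi_gt_three])).1 c3
      linarith
    rcases this with h | h <;> positivity
  exact pos_of_mul_pos_right h4 (by positivity)

lemma Y_pos (α β n : ℕ) (hαβ : 0 < max α β) (t : ℝ) (ht : 0 < t) (htπ : t ≤ π) :
    0 < (J ^ (α + 2)) (f n α β) t := by
  rcases Nat.eq_zero_or_pos α with rfl | hα
  · obtain ⟨b, rfl⟩ : ∃ b, β = b + 1 := ⟨β - 1, by simp at hαβ; omega⟩
    clear hαβ
    induction b generalizing n with
    | zero => exact Y_01 t ht htπ n
    | succ b ih => exact Y_step 0 (b + 1) t ih n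
  · clear hαβ
    induction β generalizing n with
    | zero => exact Y_pos_α α n hα t ht
    | succ b ih => exact Y_step α b t ih n

/-! ### Fractional integration -/

lemma rpow_int (γ t : ℝ) (hγ : 0 < γ) :
    IntervalIntegrable (fun θ => (t - θ) ^ (γ - 1)) volume 0 t := by
  have h := (intervalIntegral.intervalIntegrable_rpow' (a := t) (b := 0)
    (show -1 < γ - 1 by linarith)).comp_sub_left t
  simpa using h

lemma by_parts (γ t : ℝ) (hγ : 0 < γ) (ht : 0 < t) (y : C(ℝ, ℝ)) :
    ∫ θ in (0:ℝ)..t, (t - θ) ^ γ * y θ = γ * ∫ θ in (0:ℝ)..t, (t - θ) ^ (γ - 1) * J y θ := by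
  have h := intervalIntegral.integral_mul_deriv_eq_deriv_mul_of_hasDerivAt (a := 0) (b := t)
    (u := fun θ => (t - θ) ^ γ) (v := fun θ => J y θ)
    (u' := fun θ => -(γ * (t - θ) ^ (γ - 1))) (v' := fun θ => y θ)
    ?_ (J y).continuous.continuousOn ?_ (fun x _ => J_deriv y x)
    ((rpow_int γ t hγ).const_mul γ).neg (y.continuous.intervalIntegrable _ _)
  · rw [h]
    simp only [sub_self, Real.zero_rpow hγ.ne', zero_mul, J_zero, mul_zero, zero_sub]
    rw [← intervalIntegral.integral_neg, ← intervalIntegral.integral_const_mul]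
    refine intervalIntegral.integral_congr fun s _ => ?_
    ring
  · exact (Continuous.rpow_const (by fun_prop) fun _ => Or.inr hγ.le).continuousOn
  · intro x hx
    rw [min_eq_left ht.le, max_eq_right ht.le] at hx
    have hne : t - x ≠ 0 := by linarith [hx.2]
    have := ((hasDerivAt_id x).const_sub t).rpow_const (p := γ) (Or.inl hne)
    refine this.congr_deriv ?_
    simp only [id]; ring

lemma frac_pos (t : ℝ) (ht : 0 < t) (m : ℕ) : ∀ (γ : ℝ) (y : C(ℝ, ℝ)), (m : ℝ) ≤ γ →
    (∀ s, 0 < s → s ≤ t → 0 < (J ^ (m + 1)) y s) →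
    0 < ∫ θ in (0:ℝ)..t, (t - θ) ^ γ * y θ := by
  induction m with
  | zero =>
    intro γ y hγ h
    simp only [Nat.cast_zero] at hγ
    simp only [zero_add, pow_one] at h
    rcases hγ.eq_or_lt with rfl | hγ
    · simpa [J_apply] using h t ht le_rfl
    · rw [by_parts γ t hγ ht]
      refine mul_pos hγ (intervalIntegral.intervalIntegral_pos_of_pos_on
        ((rpow_int γ t hγ).mul_continuousOn (J y).continuous.continuousOn) (fun x hx => ?_) ht)
      exact mul_pos (Real.rpow_pos_of_pos (by linarith [hx.2]) _) (h x hx.1 hx.2.le)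
  | succ m ih =>
    intro γ y hγ h
    push_cast at hγ
    have hγ0 : 0 < γ := by
      have : (0:ℝ) ≤ m := by positivity
      linarith
    rw [by_parts γ t hγ0 ht]
    refine mul_pos hγ0 (ih _ _ (by linarith) fun s hs hst => ?_)
    have := h s hs hst
    rwa [pow_succ, Module.End.mul_apply] at this

end JPos

theorem FJ_pos_of_nat_params (α β : ℕ) (hαβ : 0 < max α β) (δ : ℝ)
    (hδ : (α : ℝ) + 1 ≤ δ) (n : ℕ) (t : ℝ) (ht : t ∈ Set.Ioc (0:ℝ) π) :
    0 < FJ n (α : ℝ) (β : ℝ) δ t := by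
  have h := JPos.frac_pos t ht.1 (α + 1) δ (JPos.f n α β) (by push_cast; exact hδ)
    (fun s hs hst => JPos.Y_pos α β n hαβ s hs (hst.trans ht.2))
  have e : FJ n (α : ℝ) (β : ℝ) δ t = ∫ θ in (0:ℝ)..t, (t - θ) ^ δ * JPos.f n α β θ := by
    unfold FJ
    refine intervalIntegral.integral_congr fun s _ => ?_
    have h1 : (2 * (α : ℝ)) = ((2 * α : ℕ) : ℝ) := by push_cast; ring
    have h2 : (2 * (β : ℝ)) = ((2 * β : ℕ) : ℝ) := by push_cast; ring
    simp only [JPos.f, ContinuousMap.coe_mk]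
    rw [h1, h2, Real.rpow_natCast, Real.rpow_natCast]
    ring
  rw [e]; exact h
end

section
/- Let δ be a real number with δ ≥ 1. Then for every n ∈ ℕ (n ≥ 0) and every t ∈ (0, π], the integral F_n^{(0,0),δ}(t) is nonnegative. -/
open MeasureTheory Real Set

lemma sum_even_odd (f : ℕ → ℂ) (n : ℕ) : ∑ k ∈ Finset.range (2*n+1), f k =
    ∑ k ∈ Finset.range (n+1), f (2*k) + ∑ k ∈ Finset.range n, f (2*k+1) := by
  induction n with
  | zero => simp
  | succ n ih =>
    rw [show 2*(n+1)+1 = 2*n+1+1+1 by ring, Finset.sum_range_succ, Finset.sum_range_succ, ih,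
      Finset.sum_range_succ _ (n+1), Finset.sum_range_succ (fun k => f (2*k+1)) n]
    rw [show 2*(n+1) = 2*n+1+1 by ring]
    ring

lemma cos_sum (n : ℕ) (φ : ℝ) : Real.cos (2*n*φ) = ∑ k ∈ Finset.range (n+1),
    ((2*n).choose (2*k) : ℝ) * (-(Real.sin φ)^2)^k * ((Real.cos φ)^2)^(n-k) := by
  have h1 := Complex.cos_add_sin_mul_I_pow (2*n) (φ:ℂ)
  rw [add_comm (Complex.cos _), add_pow, sum_even_odd] at h1
  have h2 := congrArg Complex.re h1
  have e1 : ∀ k ∈ Finset.range (n+1), (Complex.sin φ * Complex.I)^(2*k) * Complex.cos φ^(2*n-2*k)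
      * ((2*n).choose (2*k) : ℂ) =
      ((((2*n).choose (2*k) : ℝ) * (-(Real.sin φ)^2)^k * ((Real.cos φ)^2)^(n-k) : ℝ) : ℂ) := by
    intro k hk
    rw [show 2*n-2*k = 2*(n-k) by omega, pow_mul, pow_mul, mul_pow, Complex.I_sq]
    push_cast
    ring
  have e2 : ∀ k ∈ Finset.range n, (Complex.sin φ * Complex.I)^(2*k+1) *
      Complex.cos φ^(2*n-(2*k+1)) * ((2*n).choose (2*k+1) : ℂ) =
      ((((2*n).choose (2*k+1) : ℝ) * (-(Real.sin φ)^2)^k * Real.sin φ *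
        (Real.cos φ)^(2*n-(2*k+1)) : ℝ) : ℂ) * Complex.I := by
    intro k hk
    rw [pow_succ, pow_mul, mul_pow, Complex.I_sq]
    push_cast
    ring
  rw [Finset.sum_congr rfl e1, Finset.sum_congr rfl e2, ← Finset.sum_mul, ← Complex.ofReal_sum,
    ← Complex.ofReal_sum] at h2
  have e3 : Complex.cos (((2*n : ℕ):ℂ) * φ) + Complex.sin (((2*n : ℕ):ℂ) * φ) * Complex.I
    = ((Real.cos (2*n*φ) : ℝ):ℂ) + ((Real.sin (2*n*φ) : ℝ):ℂ) * Complex.I := by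
    push_cast; ring
  rw [e3] at h2
  simp only [Complex.add_re, Complex.ofReal_re, Complex.re_ofReal_mul, Complex.I_re, mul_zero,
    add_zero] at h2
  exact h2.symm

lemma gam (k : ℕ) : Real.Gamma (k+1/2) * (k.factorial:ℝ) = ((2*k).factorial:ℝ) * √π / 4^k := by
  have h := Real.Gamma_mul_Gamma_add_half ((k:ℝ)+1/2)
  rw [show (k:ℝ)+1/2+1/2 = k+1 by ring, Real.Gamma_nat_eq_factorial,
    show 2*((k:ℝ)+1/2) = ((2*k:ℕ):ℝ)+1 by push_cast; ring, Real.Gamma_nat_eq_factorial,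
    show 1 - (((2*k:ℕ):ℝ)+1) = -((2*k:ℕ):ℝ) by ring, Real.rpow_neg (by norm_num),
    Real.rpow_natCast, pow_mul] at h
  rw [h]; norm_num; field_simp

lemma jac (n : ℕ) : ∃ c : ℝ, 0 ≤ c ∧ ∀ θ, jacobiP n (0-1/2) (0-1/2) (Real.cos θ) =
    c * Real.cos (n*θ) := by
  refine ⟨Real.Gamma (n+1/2)^2 * 4^n / (π * (2*n).factorial), by positivity, fun θ => ?_⟩
  rw [show (n:ℝ)*θ = 2*n*(θ/2) by ring, cos_sum, jacobiP, Finset.mul_sum]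
  refine Finset.sum_congr rfl fun k hk => ?_
  have hk : k ≤ n := by simpa [Nat.lt_succ_iff] using hk
  obtain ⟨m, rfl⟩ := Nat.exists_eq_add_of_le hk
  have hc : Real.cos θ = 2 * Real.cos (θ/2)^2 - 1 := by rw [← Real.cos_two_mul]; congr 1; ring
  have hs := Real.sin_sq_add_cos_sq (θ/2)
  rw [show (Real.cos θ - 1)/2 = -(Real.sin (θ/2))^2 by linarith,
    show (Real.cos θ + 1)/2 = (Real.cos (θ/2))^2 by linarith]
  rw [← mul_assoc, ← mul_assoc]
  congr 2
  have gk := gam k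
  have gm := gam m
  have hch : (((2*(k+m)).choose (2*k) : ℕ):ℝ) =
      ((2*(k+m)).factorial:ℝ) / ((2*k).factorial * (2*m).factorial) := by
    rw [Nat.cast_choose ℝ (by omega), show 2*(k+m)-2*k = 2*m by omega]
  rw [hch]
  unfold genBinom
  push_cast
  rw [show (k:ℝ)+m+(0-1/2)+1 = k+m+1/2 by ring, show (k:ℝ)+m-k+1 = m+1 by ring,
    show (k:ℝ)+m+(0-1/2)-(k+m-k)+1 = k+1/2 by ring,
    show (k:ℝ)+m+(0-1/2)-k+1 = m+1/2 by ring, Real.Gamma_nat_eq_factorial,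
    Real.Gamma_nat_eq_factorial]
  have hkp : Real.Gamma ((k:ℝ)+1/2) = ((2*k).factorial:ℝ) * √π / 4^k / k.factorial := by
    rw [← gk]; field_simp
  have hmp : Real.Gamma ((m:ℝ)+1/2) = ((2*m).factorial:ℝ) * √π / 4^m / m.factorial := by
    rw [← gm]; field_simp
  rw [hkp, hmp]
  have hpi : π = √π * √π := (Real.mul_self_sqrt Real.pi_pos.le).symm
  have h0 : √π ≠ 0 := by positivity
  generalize Real.Gamma _ = G
  generalize √π = s at *
  rw [hpi, pow_add]
  field_simp

lemma hd (t p θ : ℝ) (h : θ < t) :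
    HasDerivAt (fun x => (t-x)^p) (-(p*(t-θ)^(p-1))) θ := by
  have := ((hasDerivAt_id' θ).const_sub t).rpow_const (p := p) (Or.inl (by linarith))
  convert this using 1
  ring

lemma main_int (δ : ℝ) (hδ : 1 ≤ δ) (n : ℕ) (t : ℝ) (ht : 0 < t) :
    0 ≤ ∫ θ in (0:ℝ)..t, (t-θ)^δ * Real.cos (n*θ) := by
  rcases Nat.eq_zero_or_pos n with rfl | hn
  · apply intervalIntegral.integral_nonneg ht.le
    intro u hu
    have : 0 ≤ t - u := by linarith [hu.2]
    simp; positivity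
  have hn' : (0:ℝ) < n := by exact_mod_cast hn
  have cont : ∀ p : ℝ, 0 ≤ p → Continuous fun x : ℝ => (t-x)^p := fun p hp =>
    (continuous_const.sub continuous_id).rpow_const (fun _ => Or.inr hp)
  have s1 := intervalIntegral.integral_mul_deriv_eq_deriv_mul_of_hasDerivAt
    (a := 0) (b := t) (u := fun x => (t-x)^δ) (u' := fun x => -(δ*(t-x)^(δ-1)))
    (v := fun x => Real.sin (n*x)/n) (v' := fun x => Real.cos (n*x))
    (cont δ (by linarith)).continuousOn (by fun_prop)
    (fun x hx => hd t δ x (by simpa [ht.le] using hx.2))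
    (fun x hx => by
      have := (((hasDerivAt_id' x).const_mul (n:ℝ)).sin).div_const (n:ℝ)
      convert this using 1
      field_simp)
    ((continuous_const.mul (cont (δ-1) (by linarith))).neg.intervalIntegrable _ _)
    ((by fun_prop : Continuous fun x : ℝ => Real.cos (n*x)).intervalIntegrable _ _)
  have hint : IntervalIntegrable (fun x => -((δ-1)*(t-x)^(δ-1-1))) volume 0 t := by
    rcases hδ.eq_or_lt with rfl | h
    · simp
    · have := (intervalIntegral.intervalIntegrable_rpow' (a := 0) (b := t) (r := δ-1-1)
        (by linarith)).comp_sub_left t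
      simp only [sub_zero, sub_self] at this
      exact (this.symm.const_mul _).neg
  have s2 := intervalIntegral.integral_mul_deriv_eq_deriv_mul_of_hasDerivAt
    (a := 0) (b := t) (u := fun x => (t-x)^(δ-1)) (u' := fun x => -((δ-1)*(t-x)^(δ-1-1)))
    (v := fun x => (1-Real.cos (n*x))/n) (v' := fun x => Real.sin (n*x))
    (cont (δ-1) (by linarith)).continuousOn (by fun_prop)
    (fun x hx => hd t (δ-1) x (by simpa [ht.le] using hx.2))
    (fun x hx => by
      have := ((((hasDerivAt_id' x).const_mul (n:ℝ)).cos).const_sub 1).div_const (n:ℝ)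
      convert this using 1
      field_simp)
    hint
    ((by fun_prop : Continuous fun x : ℝ => Real.sin (n*x)).intervalIntegrable _ _)
  have p2 : 0 ≤ ∫ x in (0:ℝ)..t, (t-x)^(δ-1) * Real.sin (n*x) := by
    rw [s2]
    have a1 : 0 ≤ (t-t)^(δ-1) * ((1-Real.cos (n*t))/n) := by
      have := Real.cos_le_one (n*t)
      exact mul_nonneg (Real.rpow_nonneg (by simp) _) (div_nonneg (by linarith) hn'.le)
    have a2 : ∫ x in (0:ℝ)..t, -((δ-1)*(t-x)^(δ-1-1)) * ((1-Real.cos (n*x))/n) ≤ 0 := by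
      rw [← neg_nonneg, ← intervalIntegral.integral_neg]
      apply intervalIntegral.integral_nonneg ht.le
      intro x hx
      have := Real.cos_le_one (n*x)
      rw [neg_mul, neg_neg]
      exact mul_nonneg (mul_nonneg (by linarith) (Real.rpow_nonneg (by linarith [hx.2]) _))
        (div_nonneg (by linarith) hn'.le)
    simp only [mul_zero, Real.cos_zero, sub_self, zero_div] at a1 a2 ⊢
    linarith
  rw [s1]
  have e : ∫ x in (0:ℝ)..t, -(δ*(t-x)^(δ-1)) * (Real.sin (n*x)/n) =
      -(δ/n) * ∫ x in (0:ℝ)..t, (t-x)^(δ-1) * Real.sin (n*x) := by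
    rw [← intervalIntegral.integral_const_mul]
    congr 1; ext x; ring
  rw [e]
  have : 0 ≤ (δ/n) * ∫ x in (0:ℝ)..t, (t-x)^(δ-1) * Real.sin (n*x) :=
    mul_nonneg (div_nonneg (by linarith) hn'.le) p2
  simp only [sub_self, Real.zero_rpow (show δ ≠ 0 by linarith), mul_zero, Real.sin_zero, zero_div,
    zero_mul]
  linarith

theorem FJ_zero_zero_nonneg (δ : ℝ) (hδ : 1 ≤ δ) (n : ℕ) (t : ℝ)
    (ht : t ∈ Set.Ioc (0:ℝ) π) :
    0 ≤ FJ n 0 0 δ t := by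
  obtain ⟨c, hc, h⟩ := jac n
  unfold FJ
  have e : ∀ θ : ℝ, (t - θ) ^ δ * jacobiP n (0 - 1/2) (0 - 1/2) (Real.cos θ) *
    (Real.sin (θ / 2)) ^ (2 * (0:ℝ)) * (Real.cos (θ / 2)) ^ (2 * (0:ℝ)) =
      c * ((t-θ)^δ * Real.cos (n*θ)) := by
    intro θ
    rw [h, mul_zero, Real.rpow_zero, Real.rpow_zero]; ring
  simp_rw [e]
  rw [intervalIntegral.integral_const_mul]
  exact mul_nonneg hc (main_int δ hδ n t ht.1)
end

section
/- Let λ ∈ ℕ with λ ≥ 1, and let δ be a real number with δ ≥ λ + 1. Then for every n ∈ ℕ (n ≥ 0) and every t ∈ (0, π], the integral F_n^{λ,δ}(t) = ∫_0^t (t-θ)^δ C_n^λ(cos θ) (sin θ)^{2λ} dθ is strictly positive. -/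
open MeasureTheory Real Set

/-- Pochhammer symbol `(a)_n = a (a+1) ⋯ (a+n-1)`. -/
noncomputable def poch (a : ℝ) (n : ℕ) : ℝ := Polynomial.eval a (ascPochhammer ℝ n)

/-- Gegenbauer polynomial `C_n^λ(x) = ((2λ)_n/(λ+1/2)_n) P_n^{(λ-1/2,λ-1/2)}(x)`. -/
noncomputable def gegenbauerC (n : ℕ) (lam x : ℝ) : ℝ :=
  (poch (2 * lam) n / poch (lam + 1/2) n) * jacobiP n (lam - 1/2) (lam - 1/2) x

/-- `F_n^{λ,δ}(t) = ∫_0^t (t-θ)^δ C_n^λ(cos θ) (sin θ)^{2λ} dθ`. -/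
noncomputable def FG (n : ℕ) (lam δ t : ℝ) : ℝ :=
  ∫ θ in (0:ℝ)..t, (t - θ) ^ δ * gegenbauerC n lam (Real.cos θ) * (Real.sin θ) ^ (2 * lam)


open Filter Topology

noncomputable def FF (δ : ℝ) (g : ℝ → ℝ) (t : ℝ) : ℝ :=
  ∫ θ in (0:ℝ)..t, (t - θ) ^ δ * g θ

lemma core_deriv (φ g g' : ℝ → ℝ) (hφ : Continuous φ) (hg : ∀ x, HasDerivAt g (g' x) x)
    (hg' : Continuous g') (t : ℝ) :
    HasDerivAt (fun x => ∫ r in (0:ℝ)..x, φ r * g (x - r))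
      (φ t * g 0 + ∫ r in (0:ℝ)..t, φ r * g' (t - r)) t := by
  have hgc : Continuous g := continuous_iff_continuousAt.2 fun x => (hg x).continuousAt
  have h1 : HasDerivAt (fun x => ∫ r in (0:ℝ)..t, φ r * g (x - r))
      (∫ r in (0:ℝ)..t, φ r * g' (t - r)) t := by
    obtain ⟨C, hC⟩ : ∃ C, ∀ p ∈ (Set.uIcc 0 t) ×ˢ (Set.Icc (t-1) (t+1)),
        ‖φ p.1 * g' (p.2 - p.1)‖ ≤ C := by
      apply IsCompact.exists_bound_of_continuousOn
      · exact isCompact_uIcc.prod isCompact_Icc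
      · fun_prop
    refine (intervalIntegral.hasDerivAt_integral_of_dominated_loc_of_deriv_le
      (F := fun x r => φ r * g (x - r)) (F' := fun x r => φ r * g' (x - r))
      (s := Set.Icc (t-1) (t+1)) (bound := fun _ => C)
      (Icc_mem_nhds (by linarith) (by linarith)) ?_ ?_ ?_ ?_ ?_ ?_).2
    · exact Filter.Eventually.of_forall fun x =>
        (Continuous.aestronglyMeasurable (by fun_prop))
    · exact (Continuous.intervalIntegrable (by fun_prop) _ _)
    · exact (Continuous.aestronglyMeasurable (by fun_prop))
    · refine Filter.Eventually.of_forall fun r hr x hx => hC (r, x) ⟨Set.uIoc_subset_uIcc hr, hx⟩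
    · exact intervalIntegrable_const
    · refine Filter.Eventually.of_forall fun r hr x hx => ?_
      have := (hg (x - r)).comp x ((hasDerivAt_id x).sub_const r)
      simpa using this.const_mul (φ r)
  have h2 : HasDerivAt (fun x => ∫ r in t..x, φ r * g (x - r)) (φ t * g 0) t := by
    rw [hasDerivAt_iff_isLittleO, Asymptotics.isLittleO_iff]
    intro ε hε
    have hc : Continuous (fun p : ℝ × ℝ => φ p.1 * g (p.2 - p.1)) := by fun_prop
    have := Metric.continuousAt_iff.1 (hc.continuousAt (x := (t, t))) ε hε
    obtain ⟨d, hd, H⟩ := this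
    filter_upwards [Metric.ball_mem_nhds t hd] with x hx
    have e : (∫ r in t..x, φ r * g (x - r)) - (∫ r in t..t, φ r * g (t - r)) -
        (x - t) • (φ t * g 0) = ∫ r in t..x, (φ r * g (x - r) - φ t * g 0) := by
      rw [intervalIntegral.integral_sub (Continuous.intervalIntegrable (by fun_prop) _ _)
        intervalIntegrable_const]
      simp [mul_left_comm]
    rw [e]
    refine intervalIntegral.norm_integral_le_of_norm_le_const fun r hr => ?_
    have hr' := Set.uIoc_subset_uIcc hr
    have hrt : |r - t| ≤ |x - t| := by
      have := Set.abs_sub_left_of_mem_uIcc hr'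
      simpa using this
    have hx' : |x - t| < d := by simpa [Real.dist_eq] using hx
    have := @H (r, x) (by
      rw [Prod.dist_eq, max_lt_iff]
      exact ⟨by simpa [Real.dist_eq] using hrt.trans_lt hx', hx⟩)
    have := this.le
    rw [Real.dist_eq] at this
    simpa using this
  have h3 := h2.add h1
  refine h3.congr_of_eventuallyEq (Filter.Eventually.of_forall fun x => ?_)
  show _ = (∫ r in t..x, φ r * g (x - r)) + ∫ r in (0:ℝ)..t, φ r * g (x - r)
  rw [add_comm, intervalIntegral.integral_add_adjacent_intervals] <;>
  exact (Continuous.intervalIntegrable (by fun_prop) _ _)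

lemma FF_eq (δ : ℝ) (g : ℝ → ℝ) (t : ℝ) : FF δ g t = ∫ r in (0:ℝ)..t, r ^ δ * g (t - r) := by
  have := intervalIntegral.integral_comp_sub_left (a := 0) (b := t)
    (fun r => r ^ δ * g (t - r)) t
  simpa [FF] using this

lemma FF_deriv {δ : ℝ} (hδ : 0 ≤ δ) {g g' : ℝ → ℝ} (hg : ∀ x, HasDerivAt g (g' x) x)
    (hg' : Continuous g') (t : ℝ) :
    HasDerivAt (FF δ g) (t ^ δ * g 0 + FF δ g' t) t := by
  have := core_deriv (fun r => r ^ δ) g g' (Real.continuous_rpow_const hδ) hg hg' t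
  rw [FF_eq]
  rwa [show FF δ g = fun x => ∫ r in (0:ℝ)..x, r ^ δ * g (x - r) from funext (FF_eq δ g)]

lemma FF_zero (δ : ℝ) (g : ℝ → ℝ) : FF δ g 0 = 0 := by simp [FF]

lemma FF_parts {δ : ℝ} (hδ : 1 ≤ δ) {g g' : ℝ → ℝ} (hg : ∀ x, HasDerivAt g (g' x) x)
    (hg' : Continuous g') (t : ℝ) :
    t ^ δ * g 0 + FF δ g' t = δ * FF (δ - 1) g t := by
  have h := intervalIntegral.integral_mul_deriv_eq_deriv_mul (a := 0) (b := t)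
    (u := fun θ => (t - θ) ^ δ) (u' := fun θ => -(δ * (t - θ) ^ (δ - 1))) (v := g) (v' := g')
    (fun x _ => by
      have := (Real.hasDerivAt_rpow_const (x := t - x) (Or.inr hδ)).comp x
        ((hasDerivAt_id x).const_sub t)
      refine HasDerivAt.congr_deriv this ?_
      simp)
    (fun x _ => hg x)
    (Continuous.intervalIntegrable (by
      have := Real.continuous_rpow_const (q := δ - 1) (by linarith)
      have := this.comp (continuous_const.sub continuous_id : Continuous fun x : ℝ => t - x)
      exact (continuous_const.mul this).neg) _ _)
    (hg'.intervalIntegrable _ _)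
  have h0 : (0:ℝ) ^ δ = 0 := Real.zero_rpow (by linarith)
  simp only [sub_self, sub_zero, h0, zero_mul, zero_sub] at h
  unfold FF
  rw [h, ← intervalIntegral.integral_const_mul]
  simp only [neg_mul, mul_assoc]
  rw [intervalIntegral.integral_neg]
  ring

lemma FF_lin {δ : ℝ} (hδ : 0 ≤ δ) {g h : ℝ → ℝ} (hg : Continuous g) (hh : Continuous h)
    (a b t : ℝ) : FF δ (fun x => a * h x - b * g x) t = a * FF δ h t - b * FF δ g t := by
  have hc : Continuous fun x : ℝ => (t - x) ^ δ :=
    (Real.continuous_rpow_const hδ).comp (continuous_const.sub continuous_id)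
  unfold FF
  rw [← intervalIntegral.integral_const_mul, ← intervalIntegral.integral_const_mul,
    ← intervalIntegral.integral_sub (Continuous.intervalIntegrable (by fun_prop) _ _)
      (Continuous.intervalIntegrable (by fun_prop) _ _)]
  congr 1
  ext x
  ring

lemma psi_exists (m : ℝ) : ∃ ψ ψ1 : ℝ → ℝ, (∀ x, HasDerivAt ψ (ψ1 x) x) ∧
    (∀ x, HasDerivAt ψ1 (1 - m ^ 2 * ψ x) x) ∧ ψ 0 = 0 ∧ ψ1 0 = 0 ∧ ∀ x, 0 ≤ ψ x := by
  by_cases hm : m = 0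
  · refine ⟨fun x => x ^ 2 / 2, fun x => x, fun x => ?_, fun x => ?_, by simp, rfl,
      fun x => by positivity⟩
    · have := (hasDerivAt_pow 2 x).div_const 2
      simpa using this
    · subst hm
      refine HasDerivAt.congr_deriv (hasDerivAt_id' x) (by simp)
  · have hl : ∀ x, HasDerivAt (fun x : ℝ => m * x) m x := fun x => by
      simpa using (hasDerivAt_id x).const_mul m
    refine ⟨fun x => (1 - cos (m * x)) / m ^ 2, fun x => sin (m * x) / m, fun x => ?_, fun x => ?_,
      by simp, by simp, fun x => ?_⟩
    · have := ((hl x).cos.const_sub 1).div_const (m ^ 2)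
      refine HasDerivAt.congr_deriv this ?_
      field_simp
    · have := ((hl x).sin).div_const m
      refine HasDerivAt.congr_deriv this ?_
      field_simp
      ring
    · have := cos_le_one (m * x)
      exact div_nonneg (by linarith) (sq_nonneg m)

lemma ode_cmp {m : ℝ} {f f1 r r1 : ℝ → ℝ} (hf : ∀ x, HasDerivAt f (f1 x) x)
    (hf1c : Continuous f1) (hf1 : ∀ x > 0, HasDerivAt f1 (r x - m ^ 2 * f x) x)
    (hrc : Continuous r) (hr : ∀ x > 0, HasDerivAt r (r1 x) x)
    (hr1 : ∀ x > 0, 0 ≤ r1 x) (f0 : f 0 = 0) (f10 : f1 0 = 0) (r0 : 0 ≤ r 0) :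
    (∀ t ≥ 0, 0 ≤ f t) ∧ ((∃ ε > 0, ∀ x ∈ Set.Ioo 0 ε, 0 < r1 x) → ∀ t > 0, 0 < f t) := by
  obtain ⟨ψ, ψ1, h1, h2, p0, p10, pn⟩ := psi_exists m
  have hfc : Continuous f := continuous_iff_continuousAt.2 fun x => (hf x).continuousAt
  have hψc : Continuous ψ := continuous_iff_continuousAt.2 fun x => (h1 x).continuousAt
  have hψ1c : Continuous ψ1 := continuous_iff_continuousAt.2 fun x => (h2 x).continuousAt
  have key : ∀ t ≥ 0, ∃ W : ℝ → ℝ, MonotoneOn W (Set.Icc 0 t) ∧ 0 ≤ W 0 ∧ W t = f t ∧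
      ∀ x > 0, HasDerivAt W (ψ (t - x) * r1 x) x := by
    intro t ht
    have hd : ∀ x > 0, HasDerivAt (fun s => ψ (t - s) * (r s - m ^ 2 * f s) + ψ1 (t - s) * f1 s
        + f s) (ψ (t - x) * r1 x) x := by
      intro x hx
      have hs : HasDerivAt (fun s => t - s) (-1) x := by
        simpa using (hasDerivAt_id x).const_sub t
      have a1 := (h1 (t - x)).comp x hs
      have a2 := (h2 (t - x)).comp x hs
      have := ((a1.mul ((hr x hx).sub ((hf x).const_mul (m ^ 2)))).add (a2.mul (hf1 x hx))).add (hf x)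
      refine HasDerivAt.congr_deriv this ?_
      simp only [Function.comp, Pi.sub_apply]
      ring
    refine ⟨_, ?_, ?_, ?_, hd⟩
    · apply monotoneOn_of_deriv_nonneg (convex_Icc _ _)
      · fun_prop
      · intro x hx
        rw [interior_Icc] at hx
        exact (hd x hx.1).differentiableAt.differentiableWithinAt
      · intro x hx
        rw [interior_Icc] at hx
        rw [(hd x hx.1).deriv]
        exact mul_nonneg (pn _) (hr1 x hx.1)
    · simp only [f0, f10, sub_zero, mul_zero, add_zero]
      exact mul_nonneg (pn _) r0
    · simp [p0, p10]
  constructor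
  · intro t ht
    obtain ⟨W, hW, h0, ht', -⟩ := key t ht
    rw [← ht']
    exact h0.trans (hW ⟨le_rfl, ht⟩ ⟨ht, le_rfl⟩ ht)
  · rintro ⟨ε, hε, hp⟩ t ht
    obtain ⟨W, hW, h0, ht', hd⟩ := key t ht.le
    by_contra hneg
    have hc : ∀ x ∈ Set.Icc 0 t, W x = 0 := by
      intro x hx
      have b1 := hW ⟨le_rfl, ht.le⟩ hx hx.1
      have b2 := hW hx ⟨ht.le, le_rfl⟩ hx.2
      linarith
    have hz : ∀ x ∈ Set.Ioo 0 (min ε t), ψ (t - x) = 0 := by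
      intro x hx
      have hx1 : x < ε := hx.2.trans_le (min_le_left _ _)
      have hx2 : x < t := hx.2.trans_le (min_le_right _ _)
      have e : W =ᶠ[𝓝 x] fun _ => 0 := by
        filter_upwards [Ioo_mem_nhds hx.1 hx2] with y hy using hc y ⟨hy.1.le, hy.2.le⟩
      have := (hd x hx.1).unique ((hasDerivAt_const x (0:ℝ)).congr_of_eventuallyEq e)
      have hq := hp x ⟨hx.1, hx1⟩
      rcases mul_eq_zero.1 this with h | h
      · exact h
      · exact absurd h hq.ne'
    have hμ : 0 < min ε t := lt_min hε ht
    have hz' : ∀ y ∈ Set.Ioo (t - min ε t) t, ψ y = 0 := by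
      intro y hy
      have := hz (t - y) ⟨by linarith [hy.2], by linarith [hy.1]⟩
      simpa using this
    have hz1 : ∀ y ∈ Set.Ioo (t - min ε t) t, ψ1 y = 0 := by
      intro y hy
      have e : ψ =ᶠ[𝓝 y] fun _ => 0 := by
        filter_upwards [Ioo_mem_nhds hy.1 hy.2] with z hz using hz' z hz
      exact (h1 y).unique ((hasDerivAt_const y (0:ℝ)).congr_of_eventuallyEq e)
    obtain ⟨y, hy⟩ : (Set.Ioo (t - min ε t) t).Nonempty := Set.nonempty_Ioo.2 (by linarith)
    have e : ψ1 =ᶠ[𝓝 y] fun _ => 0 := by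
      filter_upwards [Ioo_mem_nhds hy.1 hy.2] with z hz using hz1 z hz
    have := (h2 y).unique ((hasDerivAt_const y (0:ℝ)).congr_of_eventuallyEq e)
    rw [hz' y hy] at this
    norm_num at this

def PosF (δ : ℝ) (g : ℝ → ℝ) : Prop :=
  (∀ x ≥ 0, 0 ≤ FF δ g x) ∧ ∃ ε > 0, ∀ x ∈ Set.Ioo 0 ε, 0 < FF δ g x

lemma step_pos {δ m c : ℝ} (hδ : 2 ≤ δ) (hc : 0 < c) {g g1 g2 h h1 : ℝ → ℝ}
    (hg : ∀ x, HasDerivAt g (g1 x) x) (hg1 : ∀ x, HasDerivAt g1 (g2 x) x)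
    (hh : ∀ x, HasDerivAt h (h1 x) x) (hh1 : Continuous h1)
    (hode : ∀ x, g2 x = c * h x - m ^ 2 * g x) (g0 : g 0 = 0) (g10 : g1 0 = 0)
    (hpos : PosF (δ - 1) h) : ∀ t > 0, 0 < FF δ g t := by
  have hgc : Continuous g := continuous_iff_continuousAt.2 fun x => (hg x).continuousAt
  have hg1c : Continuous g1 := continuous_iff_continuousAt.2 fun x => (hg1 x).continuousAt
  have hhc : Continuous h := continuous_iff_continuousAt.2 fun x => (hh x).continuousAt
  have hode' : g2 = fun x => c * h x - m ^ 2 * g x := funext hode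
  have hg2c : Continuous g2 := by rw [hode']; fun_prop
  have d1 : ∀ x, HasDerivAt (FF δ g) (FF δ g1 x) x := fun x => by
    simpa [g0] using FF_deriv (by linarith) hg hg1c x
  have d2 : ∀ x, HasDerivAt (FF δ g1) (c * FF δ h x - m ^ 2 * FF δ g x) x := fun x => by
    have := FF_deriv (δ := δ) (by linarith) hg1 hg2c x
    rw [g10, hode', FF_lin (by linarith) hgc hhc] at this
    simpa using this
  have d3 : ∀ x, HasDerivAt (FF δ h) (δ * FF (δ - 1) h x) x := fun x => by
    rw [← FF_parts (by linarith) hh hh1]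
    exact FF_deriv (by linarith) hh hh1 x
  refine (ode_cmp (m := m) (f := FF δ g) (f1 := FF δ g1) (r := fun x => c * FF δ h x)
    (r1 := fun x => c * (δ * FF (δ - 1) h x)) d1
    (continuous_iff_continuousAt.2 fun x => (d2 x).continuousAt) (fun x _ => d2 x)
    (continuous_iff_continuousAt.2 fun x => ((d3 x).const_mul c).continuousAt)
    (fun x _ => (d3 x).const_mul c) ?_ (FF_zero _ _) (FF_zero _ _) (by simp [FF_zero])).2 ?_
  · intro x hx
    exact mul_nonneg hc.le (mul_nonneg (by linarith) (hpos.1 x hx.le))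
  · obtain ⟨ε, hε, H⟩ := hpos.2
    exact ⟨ε, hε, fun x hx => mul_pos hc (mul_pos (by linarith) (H x hx))⟩

lemma base_pos {δ m : ℝ} (hδ : 1 ≤ δ) {g g1 g2 : ℝ → ℝ}
    (hg : ∀ x, HasDerivAt g (g1 x) x) (hg1 : ∀ x, HasDerivAt g1 (g2 x) x)
    (hode : ∀ x, g2 x = - m ^ 2 * g x) (g0 : 0 < g 0) (g10 : g1 0 = 0) : PosF δ g := by
  have hgc : Continuous g := continuous_iff_continuousAt.2 fun x => (hg x).continuousAt
  have hg1c : Continuous g1 := continuous_iff_continuousAt.2 fun x => (hg1 x).continuousAt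
  have hode' : g2 = fun x => 0 * g x - m ^ 2 * g x := funext fun x => by rw [hode]; ring
  have hg2c : Continuous g2 := by rw [hode']; fun_prop
  have d1 : ∀ x, HasDerivAt (FF δ g) (x ^ δ * g 0 + FF δ g1 x) x := fun x =>
    FF_deriv (by linarith) hg hg1c x
  have d2 : ∀ x, HasDerivAt (fun x => x ^ δ * g 0 + FF δ g1 x)
      (δ * x ^ (δ - 1) * g 0 - m ^ 2 * FF δ g x) x := fun x => by
    have := FF_deriv (δ := δ) (by linarith) hg1 hg2c x
    rw [g10, hode', FF_lin (by linarith) hgc hgc] at this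
    have := ((Real.hasDerivAt_rpow_const (x := x) (Or.inr hδ)).mul_const (g 0)).add this
    refine this.congr_deriv ?_
    ring
  refine ⟨(ode_cmp (m := m) (f := FF δ g) (f1 := fun x => x ^ δ * g 0 + FF δ g1 x)
    (r := fun x => δ * x ^ (δ - 1) * g 0)
    (r1 := fun x => δ * ((δ - 1) * x ^ (δ - 1 - 1)) * g 0) d1
    (continuous_iff_continuousAt.2 fun x => (d2 x).continuousAt) (fun x _ => d2 x)
    ?_ ?_ ?_ (FF_zero _ _) ?_ ?_).1, ?_⟩
  · have := Real.continuous_rpow_const (q := δ - 1) (by linarith)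
    fun_prop
  · intro x hx
    exact ((Real.hasDerivAt_rpow_const (Or.inl hx.ne')).const_mul δ).mul_const (g 0)
  · intro x hx
    have := Real.rpow_nonneg hx.le (δ - 1 - 1)
    have : 0 ≤ δ - 1 := by linarith
    positivity
  · simp [FF_zero, Real.zero_rpow (show δ ≠ 0 by linarith)]
  · have := Real.rpow_nonneg (le_refl (0:ℝ)) (δ - 1)
    positivity
  · obtain ⟨ε, hε, H⟩ := Metric.eventually_nhds_iff.1
      (hgc.continuousAt.eventually (lt_mem_nhds g0))
    refine ⟨ε, hε, fun x hx => ?_⟩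
    unfold FF
    apply intervalIntegral.intervalIntegral_pos_of_pos_on
    · apply Continuous.intervalIntegrable
      have hc : Continuous fun y : ℝ => (x - y) ^ δ :=
        (Real.continuous_rpow_const (by linarith)).comp (continuous_const.sub continuous_id)
      fun_prop
    · intro y hy
      refine mul_pos (Real.rpow_pos_of_pos (by linarith [hy.2]) _) (H ?_)
      rw [Real.dist_eq, sub_zero, abs_of_pos hy.1]
      exact hy.2.trans hx.2
    · exact hx.1

noncomputable def hmono (a b : ℕ) (θ : ℝ) : ℝ := Real.sin (θ / 2) ^ a * Real.cos (θ / 2) ^ b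

noncomputable def hmono1 (a b : ℕ) (θ : ℝ) : ℝ :=
  (a / 2 : ℝ) * hmono (a - 1) (b + 1) θ - (b / 2 : ℝ) * hmono (a + 1) (b - 1) θ

noncomputable def hmono2 (a b : ℕ) (θ : ℝ) : ℝ :=
  (a / 2 : ℝ) * hmono1 (a - 1) (b + 1) θ - (b / 2 : ℝ) * hmono1 (a + 1) (b - 1) θ

lemma hmono_deriv (a b : ℕ) (θ : ℝ) : HasDerivAt (hmono a b) (hmono1 a b θ) θ := by
  have h : HasDerivAt (fun x : ℝ => x / 2) (1 / 2) θ := (hasDerivAt_id' θ).div_const 2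
  have := (h.sin.pow a).mul (h.cos.pow b)
  refine HasDerivAt.congr_deriv this ?_
  simp only [hmono1, hmono, Pi.pow_apply]
  ring

lemma hmono1_deriv (a b : ℕ) (θ : ℝ) : HasDerivAt (hmono1 a b) (hmono2 a b θ) θ :=
  ((hmono_deriv (a - 1) (b + 1) θ).const_mul _).sub ((hmono_deriv (a + 1) (b - 1) θ).const_mul _)

lemma hmono_lap (a b : ℕ) (θ : ℝ) :
    hmono2 a b θ + ((a + b : ℝ) / 2) ^ 2 * hmono a b θ =
      1 / 4 * ((a : ℝ) * (a - 1) * hmono (a - 2) b θ + b * (b - 1) * hmono a (b - 2) θ) := by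
  have h := Real.sin_sq_add_cos_sq (θ / 2)
  rcases a with _ | _ | a <;> rcases b with _ | _ | b <;>
  simp only [hmono2, hmono1, hmono, Nat.add_sub_cancel, Nat.zero_sub, Nat.zero_add,
    Nat.reduceAdd, Nat.reduceSub, Nat.sub_self, Nat.cast_zero, Nat.cast_one, Nat.cast_add,
    show ∀ x : ℕ, x + 1 + 1 - 1 = x + 1 from fun _ => rfl,
    show ∀ x : ℕ, x + 1 + 1 - 2 = x from fun _ => rfl]
  · ring
  · ring
  · linear_combination 1 / 4 * ((b + 1 + 1 : ℝ) * (b + 1) * (Real.cos (θ / 2) ^ b)) * h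
  · ring
  · ring
  · linear_combination 1 / 4 * ((b + 1 + 1 : ℝ) * (b + 1) * (Real.sin (θ / 2) *
      Real.cos (θ / 2) ^ b)) * h
  · linear_combination 1 / 4 * ((a + 1 + 1 : ℝ) * (a + 1) * (Real.sin (θ / 2) ^ a)) * h
  · linear_combination 1 / 4 * ((a + 1 + 1 : ℝ) * (a + 1) * (Real.sin (θ / 2) ^ a *
      Real.cos (θ / 2))) * h
  · linear_combination 1 / 4 * ((a + 1 + 1 : ℝ) * (a + 1) * (Real.sin (θ / 2) ^ a *
      Real.cos (θ / 2) ^ (b + 2)) + (b + 1 + 1 : ℝ) * (b + 1) * (Real.sin (θ / 2) ^ (a + 2) *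
      Real.cos (θ / 2) ^ b)) * h

noncomputable def Bc (n : ℕ) (l : ℝ) (k : ℕ) : ℝ :=
  (-1) ^ k / (Real.Gamma (k + 1) * Real.Gamma (n - k + 1) * Real.Gamma (k + l + 1 / 2) *
    Real.Gamma (n - k + l + 1 / 2))

lemma Bc_shift (n : ℕ) (l : ℝ) (hl : 0 ≤ l) (k : ℕ) (hk : k ≤ n) :
    Bc n l k = (k + l + 1 / 2) * (n - k + l + 1 / 2) * Bc n (l + 1) k := by
  have hk' : (k : ℝ) ≤ n := by exact_mod_cast hk
  have hk0 : (0 : ℝ) ≤ k := k.cast_nonneg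
  have p1 : (0:ℝ) < k + l + 1 / 2 := by linarith
  have p2 : (0:ℝ) < n - k + l + 1 / 2 := by linarith
  have e1 := Real.Gamma_add_one p1.ne'
  have e2 := Real.Gamma_add_one p2.ne'
  have q1 := Real.Gamma_pos_of_pos p1
  have q2 := Real.Gamma_pos_of_pos p2
  have q3 := Real.Gamma_pos_of_pos (show (0:ℝ) < k + 1 by linarith)
  have q4 := Real.Gamma_pos_of_pos (show (0:ℝ) < n - k + 1 by linarith)
  unfold Bc
  rw [show (k : ℝ) + (l + 1) + 1 / 2 = k + l + 1 / 2 + 1 by ring,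
    show (n : ℝ) - k + (l + 1) + 1 / 2 = n - k + l + 1 / 2 + 1 by ring, e1, e2]
  generalize Real.Gamma (k + l + 1 / 2) = G1 at *
  generalize Real.Gamma (n - k + l + 1 / 2) = G2 at *
  generalize (k : ℝ) + l + 1 / 2 = P1 at *
  generalize (n : ℝ) - k + l + 1 / 2 = P2 at *
  field_simp

lemma Bc_next (n : ℕ) (l : ℝ) (hl : 0 ≤ l) (k : ℕ) (hk : k < n) :
    (k + 1) * (k + l + 1 / 2) * Bc n l (k + 1) = - ((n - k) * (n - k + l - 1 / 2) * Bc n l k) := by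
  have hk' : (k : ℝ) + 1 ≤ n := by exact_mod_cast hk
  have hk0 : (0 : ℝ) ≤ k := k.cast_nonneg
  have p1 : (0:ℝ) < k + l + 1 / 2 := by linarith
  have p2 : (0:ℝ) < n - k + l - 1 / 2 := by linarith
  have p3 : (0:ℝ) < k + 1 := by linarith
  have p4 : (0:ℝ) < n - k := by linarith
  have e1 := Real.Gamma_add_one p1.ne'
  have e2 := Real.Gamma_add_one p2.ne'
  have e3 := Real.Gamma_add_one p3.ne'
  have e4 := Real.Gamma_add_one p4.ne'
  have q1 := Real.Gamma_pos_of_pos p1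
  have q2 := Real.Gamma_pos_of_pos p2
  have q3 := Real.Gamma_pos_of_pos p3
  have q4 := Real.Gamma_pos_of_pos p4
  unfold Bc
  push_cast
  rw [show (k : ℝ) + 1 + l + 1 / 2 = k + l + 1 / 2 + 1 by ring,
    show (n : ℝ) - k + l + 1 / 2 = n - k + l - 1 / 2 + 1 by ring,
    show (n : ℝ) - (k + 1) + 1 = n - k by ring,
    show (n : ℝ) - (k + 1) + l + 1 / 2 = n - k + l - 1 / 2 by ring, e1, e2, e3, e4, pow_succ]
  generalize Real.Gamma (k + l + 1 / 2) = G1 at *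
  generalize Real.Gamma (n - k + l - 1 / 2) = G2 at *
  generalize Real.Gamma (k + 1) = G3 at *
  generalize Real.Gamma (n - k) = G4 at *
  generalize (k : ℝ) + l + 1 / 2 = P1 at *
  generalize (n : ℝ) - k + l - 1 / 2 = P2 at *
  generalize (n : ℝ) - k = P3 at *
  generalize (k : ℝ) + 1 = P4 at *
  field_simp

lemma sum_tel (n : ℕ) (α β M : ℕ → ℝ) (h0 : α 0 = 0) (hn : β n = 0)
    (h : ∀ k < n, α (k + 1) + β k = 0) :
    ∑ k ∈ Finset.range (n + 1), (α k * M k + β k * M (k + 1)) = 0 := by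
  rw [Finset.sum_add_distrib, Finset.sum_range_succ', Finset.sum_range_succ
    (fun k => β k * M (k + 1)), h0, hn, zero_mul, zero_mul, add_zero, add_zero,
    ← Finset.sum_add_distrib]
  refine Finset.sum_eq_zero fun k hk => ?_
  rw [← add_mul, h k (Finset.mem_range.1 hk), zero_mul]

noncomputable def gg (n l : ℕ) (θ : ℝ) : ℝ :=
  ∑ k ∈ Finset.range (n + 1), Bc n l k * hmono (2 * (k + l)) (2 * (n - k + l)) θ
noncomputable def gg1 (n l : ℕ) (θ : ℝ) : ℝ :=
  ∑ k ∈ Finset.range (n + 1), Bc n l k * hmono1 (2 * (k + l)) (2 * (n - k + l)) θ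
noncomputable def gg2 (n l : ℕ) (θ : ℝ) : ℝ :=
  ∑ k ∈ Finset.range (n + 1), Bc n l k * hmono2 (2 * (k + l)) (2 * (n - k + l)) θ

lemma gg_deriv (n l : ℕ) (θ : ℝ) : HasDerivAt (gg n l) (gg1 n l θ) θ :=
  HasDerivAt.fun_sum fun _ _ => (hmono_deriv _ _ θ).const_mul _

lemma gg1_deriv (n l : ℕ) (θ : ℝ) : HasDerivAt (gg1 n l) (gg2 n l θ) θ :=
  HasDerivAt.fun_sum fun _ _ => (hmono1_deriv _ _ θ).const_mul _

lemma hmono1_zero (p b : ℕ) : hmono1 (2 * p) b 0 = 0 := by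
  rcases p with _ | p
  · simp [hmono1, hmono]
  · simp [hmono1, hmono, show 2 * (p + 1) - 1 ≠ 0 by omega]

lemma gg1_zero (n l : ℕ) : gg1 n l 0 = 0 := by
  simp [gg1, hmono1_zero]

lemma gg_zero_succ (n l : ℕ) : gg n (l + 1) 0 = 0 := by
  refine Finset.sum_eq_zero fun k _ => ?_
  simp [hmono]

lemma gg_zero_zero (n : ℕ) : 0 < gg n 0 0 := by
  have : gg n 0 0 = Bc n 0 0 := by
    unfold gg
    rw [Finset.sum_eq_single 0]
    · simp [hmono]
    · intro k _ hk
      simp [hmono, hk]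
    · simp
  rw [this]
  have hn : (0:ℝ) ≤ n := n.cast_nonneg
  have q2 := Real.Gamma_pos_of_pos (show (0:ℝ) < n - (0:ℕ) + 1 by push_cast; linarith)
  have q3 := Real.Gamma_pos_of_pos (show (0:ℝ) < n - (0:ℕ) + 0 + 1 / 2 by push_cast; linarith)
  have q1 := Real.Gamma_pos_of_pos (show (0:ℝ) < (0:ℕ) + 1 by norm_num)
  have q4 := Real.Gamma_pos_of_pos (show (0:ℝ) < (0:ℕ) + 0 + 1 / 2 by norm_num)
  unfold Bc
  rw [pow_zero]
  positivity

lemma gg_ode_zero (n : ℕ) (θ : ℝ) : gg2 n 0 θ = - (n : ℝ) ^ 2 * gg n 0 θ := by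
  have key := sum_tel n (fun k => (k : ℝ) * (k - 1 / 2) * Bc n 0 k)
    (fun k => ((n : ℝ) - k) * (n - k - 1 / 2) * Bc n 0 k)
    (fun k => hmono (2 * k - 2) (2 * (n - k)) θ) (by simp) (by simp) (by
      intro k hk
      have := Bc_next n 0 le_rfl k hk
      push_cast
      linear_combination this)
  rw [neg_mul, eq_neg_iff_add_eq_zero, ← key]
  unfold gg2 gg
  rw [Finset.mul_sum, ← Finset.sum_add_distrib]
  refine Finset.sum_congr rfl fun k hk => ?_
  have hk' : k ≤ n := Nat.lt_succ_iff.1 (Finset.mem_range.1 hk)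
  have hl := hmono_lap (2 * (k + 0)) (2 * (n - k + 0)) θ
  simp only [add_zero] at hl ⊢
  push_cast [Nat.cast_sub hk'] at hl ⊢
  rw [show 2 * (k + 1) - 2 = 2 * k by omega, show 2 * (n - (k + 1)) = 2 * (n - k) - 2 by omega]
  linear_combination Bc n 0 k * hl

lemma gg_ode_succ (n l : ℕ) (θ : ℝ) : gg2 n (l + 1) θ =
    ((l + 1 : ℝ) / (n + l + 1 / 2)) * gg n l θ - (n + 2 * l + 2 : ℝ) ^ 2 * gg n (l + 1) θ := by
  have hp : (0:ℝ) < n + l + 1 / 2 := by positivity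
  obtain ⟨c, hc⟩ : ∃ c : ℝ, c = (l + 1 : ℝ) / (n + l + 1 / 2) := ⟨_, rfl⟩
  have hc' : c * (n + l + 1 / 2) = l + 1 := by rw [hc]; field_simp
  rw [← hc]
  have hl0 : (0:ℝ) ≤ l := l.cast_nonneg
  have key := sum_tel n
    (fun k => ((k : ℝ) + l + 1) * (k + l + 1 / 2) * Bc n (l + 1) k - c * Bc n l k)
    (fun k => ((n : ℝ) - k + l + 1) * (n - k + l + 1 / 2) * Bc n (l + 1) k - c * Bc n l k)
    (fun k => hmono (2 * (k + l)) (2 * (n + 1 - k + l)) θ)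
    (by
      simp only [Bc_shift n l hl0 0 (Nat.zero_le _)]
      push_cast
      linear_combination - (l + 1 / 2) * Bc n (l + 1) 0 * hc')
    (by
      simp only [Bc_shift n l hl0 n le_rfl]
      linear_combination - (l + 1 / 2) * Bc n (l + 1) n * hc')
    (by
      intro k hk
      have h := Bc_next n (l + 1) (by positivity) k hk
      simp only [Bc_shift n l hl0 k hk.le, Bc_shift n l hl0 (k + 1) hk]
      push_cast
      linear_combination (1 + c) * h - ((k + l + 3 / 2) * Bc n (l + 1) (k + 1) +
        (n - k + l + 1 / 2) * Bc n (l + 1) k) * hc')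
  rw [← sub_eq_zero, ← key]
  unfold gg2 gg
  rw [Finset.mul_sum, Finset.mul_sum, ← Finset.sum_sub_distrib, ← Finset.sum_sub_distrib]
  refine Finset.sum_congr rfl fun k hk => ?_
  have hk' : k ≤ n := Nat.lt_succ_iff.1 (Finset.mem_range.1 hk)
  have hl := hmono_lap (2 * (k + (l + 1))) (2 * (n - k + (l + 1))) θ
  have hsp : hmono (2 * (k + l)) (2 * (n - k + l)) θ =
      hmono (2 * (k + l)) (2 * (n - k + (l + 1))) θ +
      hmono (2 * (k + (l + 1))) (2 * (n - k + l)) θ := by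
    have h := Real.sin_sq_add_cos_sq (θ / 2)
    unfold hmono
    linear_combination - (Real.sin (θ / 2) ^ (2 * (k + l)) *
      Real.cos (θ / 2) ^ (2 * (n - k + l))) * h
  rw [show 2 * (k + (l + 1)) - 2 = 2 * (k + l) by omega,
    show 2 * (n - k + (l + 1)) - 2 = 2 * (n - k + l) by omega] at hl
  rw [show 2 * (k + 1 + l) = 2 * (k + (l + 1)) by omega,
    show 2 * (n + 1 - (k + 1) + l) = 2 * (n - k + l) by omega,
    show 2 * (n + 1 - k + l) = 2 * (n - k + (l + 1)) by omega, hsp]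
  push_cast [Nat.cast_sub hk'] at hl ⊢
  linear_combination Bc n (l + 1) k * hl

lemma gg_pos_zero (n : ℕ) (δ : ℝ) (hδ : 1 ≤ δ) : PosF δ (gg n 0) :=
  base_pos (m := n) hδ (gg_deriv n 0) (gg1_deriv n 0) (gg_ode_zero n) (gg_zero_zero n)
    (gg1_zero n 0)

lemma gg_pos (n l : ℕ) : ∀ δ : ℝ, (l : ℝ) + 2 ≤ δ → ∀ t > 0, 0 < FF δ (gg n (l + 1)) t := by
  have cont : ∀ l, Continuous (gg1 n l) := fun l =>
    continuous_iff_continuousAt.2 fun x => (gg1_deriv n l x).continuousAt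
  induction l with
  | zero =>
    intro δ hδ
    push_cast at hδ
    exact step_pos (m := n + 2 * (0:ℕ) + 2) (by linarith) (by positivity) (gg_deriv n (0 + 1))
      (gg1_deriv n (0 + 1)) (gg_deriv n 0) (cont 0) (gg_ode_succ n 0) (gg_zero_succ n 0)
      (gg1_zero n _) (gg_pos_zero n _ (by linarith))
  | succ l ih =>
    intro δ hδ
    push_cast at hδ
    have hl0 : (0:ℝ) ≤ l := l.cast_nonneg
    have h := ih (δ - 1) (by linarith)
    refine step_pos (m := n + 2 * (l + 1 : ℕ) + 2) (by linarith) (by positivity)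
      (gg_deriv n (l + 1 + 1))
      (gg1_deriv n (l + 1 + 1)) (gg_deriv n (l + 1)) (cont _) (gg_ode_succ n (l + 1))
      (gg_zero_succ n (l + 1)) (gg1_zero n _) ⟨fun x hx => ?_, 1, one_pos, fun x hx => h x hx.1⟩
    rcases hx.lt_or_eq with h' | h'
    · exact (h x h').le
    · rw [← h', FF_zero]

lemma poch_pos {a : ℝ} (ha : 0 < a) (n : ℕ) : 0 < poch a n := ascPochhammer_pos n a ha

lemma jacobi_gg (n l : ℕ) (θ : ℝ) :
    jacobiP n ((l : ℝ) - 1 / 2) ((l : ℝ) - 1 / 2) (Real.cos θ) * (Real.sin θ) ^ (2 * (l : ℝ)) =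
      Real.Gamma (n + l + 1 / 2) ^ 2 * 4 ^ l * gg n l θ := by
  have hs : Real.sin θ = 2 * Real.sin (θ / 2) * Real.cos (θ / 2) := by
    rw [← Real.sin_two_mul]; congr 1; ring
  have hc : Real.cos θ = 2 * Real.cos (θ / 2) ^ 2 - 1 := by
    rw [← Real.cos_two_mul]; congr 1; ring
  have hsc := Real.sin_sq_add_cos_sq (θ / 2)
  have e1 : (Real.cos θ - 1) / 2 = - Real.sin (θ / 2) ^ 2 := by rw [hc]; linarith
  have e2 : (Real.cos θ + 1) / 2 = Real.cos (θ / 2) ^ 2 := by rw [hc]; ring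
  have e3 : Real.sin θ ^ (2 * (l : ℝ)) =
      4 ^ l * (Real.sin (θ / 2) ^ (2 * l) * Real.cos (θ / 2) ^ (2 * l)) := by
    rw [show 2 * (l : ℝ) = ((2 * l : ℕ) : ℝ) by push_cast; ring, Real.rpow_natCast, hs]
    rw [mul_pow, mul_pow, pow_mul 2 2 l]
    norm_num
    ring
  unfold jacobiP gg
  rw [e1, e2, e3, Finset.sum_mul, Finset.mul_sum]
  refine Finset.sum_congr rfl fun k hk => ?_
  unfold genBinom Bc hmono
  rw [show (n:ℝ) + (l - 1 / 2) + 1 = n + l + 1 / 2 by ring,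
    show (n:ℝ) + (l - 1 / 2) - (n - k) + 1 = k + l + 1 / 2 by ring,
    show (n:ℝ) + (l - 1 / 2) - k + 1 = n - k + l + 1 / 2 by ring,
    neg_pow, ← pow_mul, ← pow_mul, mul_add 2 k l, mul_add 2 (n - k) l, pow_add, pow_add]
  simp only [div_eq_mul_inv, mul_inv]
  ring

theorem FG_pos_of_nat_lambda (lam : ℕ) (hlam : 1 ≤ lam) (δ : ℝ)
    (hδ : (lam : ℝ) + 1 ≤ δ) (n : ℕ) (t : ℝ) (ht : t ∈ Set.Ioc (0:ℝ) π) :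
    0 < FG n (lam : ℝ) δ t := by
  obtain ⟨l, rfl⟩ : ∃ l, lam = l + 1 := ⟨lam - 1, by omega⟩
  have h := gg_pos n l δ (by push_cast at hδ; linarith) t ht.1
  have hl : (0:ℝ) < ((l + 1 : ℕ) : ℝ) := by positivity
  generalize l + 1 = L at *
  have hC : 0 < poch (2 * (L:ℝ)) n / poch ((L:ℝ) + 1/2) n *
      (Real.Gamma (n + L + 1 / 2) ^ 2 * 4 ^ L) := by
    have h1 := poch_pos (show 0 < 2 * (L:ℝ) by positivity) n
    have h2 := poch_pos (show 0 < (L:ℝ) + 1/2 by positivity) n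
    have h3 := Real.Gamma_pos_of_pos (show 0 < (n:ℝ) + L + 1 / 2 by positivity)
    positivity
  have e : FG n (L : ℝ) δ t = poch (2 * (L:ℝ)) n / poch ((L:ℝ) + 1/2) n *
      (Real.Gamma (n + L + 1 / 2) ^ 2 * 4 ^ L) * FF δ (gg n L) t := by
    unfold FG FF gegenbauerC
    rw [← intervalIntegral.integral_const_mul]
    congr 1
    ext θ
    have := jacobi_gg n L θ
    linear_combination (t - θ) ^ δ * (poch (2 * (L:ℝ)) n / poch ((L:ℝ) + 1/2) n) * this
  rw [e]
  exact mul_pos hC h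
end

section
/- Let d ∈ ℕ with d ≥ 3, let t ∈ (0, π], and let δ be a real number with δ ≥ ⌈d/2⌉. Then the function θ ↦ (t - θ)_+^δ (equal to (t-θ)^δ for 0 ≤ θ ≤ t and to 0 for t < θ ≤ π) is strictly positive definite on the unit sphere S^{d-1}. -/
open MeasureTheory Real Set
open scoped RealInnerProductSpace

/-- A continuous function `g : [0,π] → ℝ` is positive definite on the unit sphere
`S^{d-1} ⊂ ℝ^d` if for every `N` and every family of `N` distinct points on the sphere,
the matrix `[g(arccos ⟨x_i, x_j⟩)]` is positive semidefinite. -/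
def PosDefOnSphere (d : ℕ) (g : ℝ → ℝ) : Prop :=
  ∀ (N : ℕ) (x : Fin N → EuclideanSpace ℝ (Fin d)),
    (∀ i, ‖x i‖ = 1) → Function.Injective x →
    (Matrix.of fun i j : Fin N => g (Real.arccos ⟪x i, x j⟫)).PosSemidef

/-- A continuous function `g : [0,π] → ℝ` is strictly positive definite on the unit sphere
`S^{d-1} ⊂ ℝ^d` if for every `N` and every family of `N` distinct points on the sphere,
the matrix `[g(arccos ⟨x_i, x_j⟩)]` is positive definite. -/
def StrictPosDefOnSphere (d : ℕ) (g : ℝ → ℝ) : Prop :=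
  ∀ (N : ℕ) (x : Fin N → EuclideanSpace ℝ (Fin d)),
    (∀ i, ‖x i‖ = 1) → Function.Injective x →
    (Matrix.of fun i j : Fin N => g (Real.arccos ⟪x i, x j⟫)).PosDef


namespace TP

/-- the integration operator -/
noncomputable def J (Ω : ℝ → ℝ) : ℝ → ℝ := fun u => ∫ v in (0:ℝ)..u, Ω v

lemma J_hasDerivAt {Ω : ℝ → ℝ} (h : Continuous Ω) (u : ℝ) : HasDerivAt (J Ω) (Ω u) u :=
  intervalIntegral.integral_hasDerivAt_right (h.intervalIntegrable _ _)
    h.aestronglyMeasurable.stronglyMeasurableAtFilter h.continuousAt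

lemma J_cont {Ω : ℝ → ℝ} (h : Continuous Ω) : Continuous (J Ω) :=
  continuous_iff_continuousAt.2 fun u => (J_hasDerivAt h u).continuousAt

lemma J_zero (Ω : ℝ → ℝ) : J Ω 0 = 0 := by simp [J]

lemma Jit_cont {Ω : ℝ → ℝ} (h : Continuous Ω) (n : ℕ) : Continuous (J^[n] Ω) := by
  induction n generalizing Ω with
  | zero => exact h
  | succ n ih => exact ih (J_cont h)

lemma Jit_pos {Ω : ℝ → ℝ} (h : Continuous Ω) (b : ℝ) (hp : ∀ u, 0 < u → u ≤ b → 0 < Ω u) (n : ℕ) :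
    ∀ u, 0 < u → u ≤ b → 0 < J^[n] Ω u := by
  induction n generalizing Ω with
  | zero => exact hp
  | succ n ih =>
    apply ih (J_cont h)
    intro u hu hub
    apply intervalIntegral.intervalIntegral_pos_of_pos_on (h.intervalIntegrable _ _) _ hu
    intro x hx
    exact hp x hx.1 (hx.2.le.trans hub)

def AM (U b : ℝ) : ℕ → ℝ → (ℝ → ℝ) → Prop
  | 0, η, f => ContinuousOn f (Icc 0 U) ∧ (∀ u ∈ Icc 0 U, 0 ≤ f u) ∧ ∀ u ∈ Icc 0 b, η ≤ f u
  | n+1, η, f => (∀ u ∈ Icc 0 U, 0 ≤ f u) ∧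
      ∃ g : ℝ → ℝ, (∀ u ∈ Icc 0 U, HasDerivAt f (-g u) u) ∧ AM U b n η g

variable {U b : ℝ}

lemma AM.nonneg {n : ℕ} {η : ℝ} {f : ℝ → ℝ} (h : AM U b n η f) : ∀ u ∈ Icc 0 U, 0 ≤ f u := by
  cases n with
  | zero => exact h.2.1
  | succ n => exact h.1

lemma AM.cont {n : ℕ} {η : ℝ} {f : ℝ → ℝ} (h : AM U b n η f) : ContinuousOn f (Icc 0 U) := by
  cases n with
  | zero => exact h.1
  | succ n =>
    obtain ⟨_, g, hg, _⟩ := h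
    exact fun u hu => (hg u hu).continuousAt.continuousWithinAt

lemma AM.weak {n : ℕ} {η η' : ℝ} {f : ℝ → ℝ} (h : AM U b n η f) (hη : η' ≤ η) :
    AM U b n η' f := by
  induction n generalizing f with
  | zero => exact ⟨h.1, h.2.1, fun u hu => hη.trans (h.2.2 u hu)⟩
  | succ n ih =>
    obtain ⟨h0, g, hg, hA⟩ := h
    exact ⟨h0, g, hg, ih hA⟩

lemma AM.pred (hbU : b ≤ U) {n : ℕ} {η : ℝ} {f : ℝ → ℝ} (h : AM U b (n+1) η f) :
    AM U b n 0 f := by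
  induction n generalizing f with
  | zero => exact ⟨h.cont, h.nonneg, fun u hu => h.nonneg u ⟨hu.1, hu.2.trans hbU⟩⟩
  | succ n ih =>
    obtain ⟨h0, g, hg, hA⟩ := h
    exact ⟨h0, g, hg, ih hA⟩

lemma AM.add {n : ℕ} {η η' : ℝ} {f f' : ℝ → ℝ} (h : AM U b n η f) (h' : AM U b n η' f') :
    AM U b n (η + η') (fun u => f u + f' u) := by
  induction n generalizing f f' with
  | zero =>
    exact ⟨h.1.add h'.1, fun u hu => add_nonneg (h.2.1 u hu) (h'.2.1 u hu),
      fun u hu => add_le_add (h.2.2 u hu) (h'.2.2 u hu)⟩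
  | succ n ih =>
    obtain ⟨h0, g, hg, hA⟩ := h
    obtain ⟨h0', g', hg', hA'⟩ := h'
    refine ⟨fun u hu => add_nonneg (h0 u hu) (h0' u hu), _, fun u hu => ?_, ih hA hA'⟩
    have := (hg u hu).add (hg' u hu)
    exact this.congr_deriv (by ring)

lemma AM.smul {n : ℕ} {η c : ℝ} (hc : 0 ≤ c) {f : ℝ → ℝ} (h : AM U b n η f) :
    AM U b n (c * η) (fun u => c * f u) := by
  induction n generalizing f with
  | zero =>
    exact ⟨continuousOn_const.mul h.1, fun u hu => mul_nonneg hc (h.2.1 u hu),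
      fun u hu => mul_le_mul_of_nonneg_left (h.2.2 u hu) hc⟩
  | succ n ih =>
    obtain ⟨h0, g, hg, hA⟩ := h
    refine ⟨fun u hu => mul_nonneg hc (h0 u hu), _, fun u hu => ?_, ih hA⟩
    have := (hg u hu).const_mul c
    exact this.congr_deriv (by ring)

lemma AM.mul (hbU : b ≤ U) {n : ℕ} {η c : ℝ} (hη : 0 ≤ η) (hc : 0 ≤ c) {f h : ℝ → ℝ}
    (hf : AM U b n η f) (hh : AM U b n 0 h) (hch : ∀ u ∈ Icc 0 b, c ≤ h u) :
    AM U b n (η * c) (fun u => f u * h u) := by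
  induction n generalizing f h η c with
  | zero =>
    refine ⟨hf.1.mul hh.1, fun u hu => mul_nonneg (hf.2.1 u hu) (hh.2.1 u hu), fun u hu => ?_⟩
    exact mul_le_mul (hf.2.2 u hu) (hch u hu) hc (hη.trans (hf.2.2 u hu))
  | succ n ih =>
    have hf0 := hf.pred hbU
    have hh0 := hh.pred hbU
    obtain ⟨h0, g, hg, hA⟩ := hf
    obtain ⟨h0', g', hg', hA'⟩ := hh
    refine ⟨fun u hu => mul_nonneg (h0 u hu) (h0' u hu), fun u => g u * h u + f u * g' u,
      fun u hu => ?_, ?_⟩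
    · have := (hg u hu).mul (hg' u hu)
      exact this.congr_deriv (by ring)
    · have h1 := ih hη hc hA hh0 hch
      have h2 := ih le_rfl le_rfl hA' hf0 (fun u hu => hf0.nonneg u ⟨hu.1, hu.2.trans hbU⟩)
      have h3 := h1.add h2
      simp only [mul_zero, add_zero] at h3
      convert h3 using 2
      ring

lemma AM_rpow (hb : b ≤ 1) (n : ℕ) (p : ℝ) (hp : 0 < p) :
    ∃ η : ℝ, 0 < η ∧ ∀ (U a : ℝ), 0 < a → a ≤ 2 → AM U b n η (fun u => (u + a) ^ (-p)) := by
  induction n generalizing p with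
  | zero =>
    refine ⟨3 ^ (-p), by positivity, fun U a ha ha2 => ⟨?_, ?_, ?_⟩⟩
    · apply ContinuousOn.rpow_const (by fun_prop)
      intro u hu
      left
      have := hu.1
      positivity
    · intro u hu
      have := hu.1
      positivity
    · intro u hu
      have h1 := hu.1
      have h2 := hu.2
      exact Real.rpow_le_rpow_of_nonpos (by positivity) (by linarith) (by linarith)
  | succ n ih =>
    obtain ⟨η, hη, H⟩ := ih (p+1) (by linarith)
    refine ⟨p * η, by positivity, fun U a ha ha2 => ⟨?_, ?_⟩⟩
    · intro u hu
      have := hu.1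
      positivity
    · refine ⟨fun u => p * (u + a) ^ (-(p+1)), fun u hu => ?_, (H U a ha ha2).smul hp.le⟩
      have h1 := hu.1
      have h2 : u + a ≠ 0 := by positivity
      have := ((hasDerivAt_id u).add_const a).rpow_const (p := -p) (Or.inl h2)
      refine this.congr_deriv ?_
      simp only [id]
      rw [show -(p+1) = -p - 1 by ring]
      ring

def VV (U b : ℝ) : ℕ → ℝ → (ℝ → ℝ) → Prop
  | 0, η, f => AM U b 1 η f
  | n+1, η, f => f U = 0 ∧
      ∃ g : ℝ → ℝ, (∀ u ∈ Icc 0 U, HasDerivAt f (-g u) u) ∧ VV U b n η g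

lemma VV.cont {n : ℕ} {η : ℝ} {f : ℝ → ℝ} (h : VV U b n η f) : ContinuousOn f (Icc 0 U) := by
  cases n with
  | zero => exact AM.cont h
  | succ n =>
    obtain ⟨_, g, hg, _⟩ := h
    exact fun u hu => (hg u hu).continuousAt.continuousWithinAt

lemma VV_mem (hbU : b ≤ U) {r σ : ℝ → ℝ} (hr : ∀ N, AM U b N 0 r) (hσ : ∀ N, AM U b N 0 σ)
    (hd : ∀ u ∈ Icc 0 U, HasDerivAt r (-σ u) u) (hrU : r U = 0) {c : ℝ} (hc : 0 ≤ c)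
    (hcr : ∀ u ∈ Icc 0 b, c ≤ r u) (m : ℕ) {η : ℝ} (hη : 0 ≤ η) {h : ℝ → ℝ}
    (hh : AM U b (m+1) η h) : VV U b m (η * c ^ m) (fun u => r u ^ m * h u) := by
  induction m generalizing η h with
  | zero => simpa [VV] using hh
  | succ m ih =>
    have hh1 := hh.pred hbU
    obtain ⟨h0, h1, hd1, hA⟩ := hh
    refine ⟨by simp [hrU], fun u => r u ^ m * (h1 u * r u + (m+1) * (h u * σ u)), fun u hu => ?_, ?_⟩
    · have := ((hd u hu).pow (m+1)).mul (hd1 u hu)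
      refine this.congr_deriv ?_
      simp
      ring
    · have e1 := AM.mul hbU hη hc hA (hr _) hcr
      have e2 := AM.mul hbU le_rfl le_rfl hh1 (hσ _)
        (fun u hu => (hσ 0).nonneg u ⟨hu.1, hu.2.trans hbU⟩)
      have e3 := e1.add (e2.smul (c := (m+1 : ℝ)) (by positivity))
      have e4 := ih (by positivity) e3
      convert e4 using 1
      ring

lemma ibp (hU : 0 ≤ U) {f g Ω : ℝ → ℝ} (hΩ : Continuous Ω)
    (hg : ∀ u ∈ Icc 0 U, HasDerivAt f (-g u) u) (hgc : ContinuousOn g (Icc 0 U)) :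
    ∫ u in (0:ℝ)..U, f u * Ω u = f U * J Ω U + ∫ u in (0:ℝ)..U, g u * J Ω u := by
  have := intervalIntegral.integral_mul_deriv_eq_deriv_mul (u := f) (v := J Ω) (u' := fun u => -g u)
    (v' := Ω) (a := 0) (b := U) (fun x hx => hg x (by rwa [uIcc_of_le hU] at hx))
    (fun x _ => J_hasDerivAt hΩ x)
    (by
      apply ContinuousOn.intervalIntegrable
      rw [uIcc_of_le hU]
      exact hgc.neg)
    (hΩ.intervalIntegrable _ _)
  rw [this, J_zero]
  simp

lemma S_lemma (hb : 0 ≤ b) (hbU : b ≤ U) (m : ℕ) {η : ℝ} {f Ω : ℝ → ℝ} (hΩ : Continuous Ω)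
    (hf : VV U b m η f) (hpos : ∀ u ∈ Icc 0 U, 0 ≤ J^[m+1] Ω u) :
    η * J (J^[m+1] Ω) b ≤ ∫ u in (0:ℝ)..U, f u * Ω u := by
  have hU := hb.trans hbU
  induction m generalizing f Ω with
  | zero =>
    obtain ⟨h0, g, hg, hA⟩ := hf
    rw [ibp hU hΩ hg hA.cont]
    simp only [zero_add, Function.iterate_one] at *
    have h1 : 0 ≤ f U * J Ω U :=
      mul_nonneg (h0 U ⟨hU, le_rfl⟩) (hpos U ⟨hU, le_rfl⟩)
    have hgJ : ContinuousOn (fun u => g u * J Ω u) (Icc 0 U) :=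
      hA.cont.mul (J_cont hΩ).continuousOn
    have i1 : IntervalIntegrable (fun u => g u * J Ω u) volume 0 b := by
      apply ContinuousOn.intervalIntegrable
      rw [uIcc_of_le hb]
      exact hgJ.mono (Icc_subset_Icc_right hbU)
    have i2 : IntervalIntegrable (fun u => g u * J Ω u) volume b U := by
      apply ContinuousOn.intervalIntegrable
      rw [uIcc_of_le hbU]
      exact hgJ.mono (Icc_subset_Icc_left hb)
    rw [← intervalIntegral.integral_add_adjacent_intervals i1 i2]
    have h2 : 0 ≤ ∫ u in b..U, g u * J Ω u := by
      apply intervalIntegral.integral_nonneg hbU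
      intro u hu
      have hu' : u ∈ Icc 0 U := ⟨hb.trans hu.1, hu.2⟩
      exact mul_nonneg (hA.2.1 u hu') (hpos u hu')
    have h3 : η * J (J Ω) b ≤ ∫ u in (0:ℝ)..b, g u * J Ω u := by
      rw [J, ← intervalIntegral.integral_const_mul]
      apply intervalIntegral.integral_mono_on hb _ i1
      · intro u hu
        exact mul_le_mul_of_nonneg_right (hA.2.2 u hu) (hpos u ⟨hu.1, hu.2.trans hbU⟩)
      · exact (continuous_const.mul (J_cont hΩ)).intervalIntegrable _ _
    linarith
  | succ m ih =>
    obtain ⟨h0, g, hg, hA⟩ := hf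
    rw [ibp hU hΩ hg hA.cont, h0, zero_mul, zero_add]
    exact ih (J_cont hΩ) hA hpos

lemma cauchy_rep (hU : 0 ≤ U) (m : ℕ) {Ω : ℝ → ℝ} (hΩ : Continuous Ω) :
    ∫ u in (0:ℝ)..U, (U - u) ^ m * Ω u = m.factorial * J^[m+1] Ω U := by
  induction m generalizing Ω with
  | zero => simp [J]
  | succ m ih =>
    rw [ibp (g := fun u => (m+1) * (U - u)^m) hU hΩ]
    · simp only [sub_self, ne_eq, Nat.add_eq_zero_iff, one_ne_zero, and_false, not_false_eq_true,
        zero_pow, zero_mul, zero_add]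
      simp_rw [mul_assoc]
      rw [intervalIntegral.integral_const_mul, ih (J_cont hΩ), Nat.factorial_succ]
      push_cast
      simp only [Function.iterate_succ_apply]
      ring
    · intro u _
      have := ((hasDerivAt_id u).const_sub U).pow (m+1)
      refine this.congr_deriv ?_
      simp
    · fun_prop

lemma Jit_nonneg_of_mono {Ω : ℝ → ℝ} (hΩ : Continuous Ω) (n : ℕ)
    (hm : MonotoneOn (J^[n+1] Ω) (Ici 0)) : ∀ u, 0 ≤ u → 0 ≤ J^[n] Ω u := by
  have h1 : ∀ u, 0 < u → 0 ≤ J^[n] Ω u := by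
    intro u hu
    have hd : HasDerivAt (J^[n+1] Ω) (J^[n] Ω u) u := by
      rw [Function.iterate_succ_apply']
      exact J_hasDerivAt (Jit_cont hΩ n) u
    rw [← hd.hasDerivWithinAt.derivWithin (uniqueDiffOn_Ici 0 u hu.le)]
    exact hm.derivWithin_nonneg
  intro u hu
  have hc := Jit_cont hΩ n
  have : u ∈ closure (Ioi 0) := by rw [closure_Ioi]; exact hu
  exact closure_minimal (t := {x | 0 ≤ J^[n] Ω x}) (fun x hx => h1 x hx)
    (isClosed_le continuous_const hc) this

end TP

namespace TP
open Filter Topology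

noncomputable def sf (u : ℝ) : ℝ := 2 * Real.arctan √u

lemma sf_cont : Continuous sf := by unfold sf; fun_prop

lemma sf_zero : sf 0 = 0 := by simp [sf]

lemma sf_mono : Monotone sf := by
  intro a b h
  unfold sf
  have := Real.arctan_strictMono.monotone (Real.sqrt_le_sqrt h)
  linarith

lemma sf_strict {a b : ℝ} (ha : 0 ≤ a) (h : a < b) : sf a < sf b := by
  unfold sf
  have := Real.arctan_strictMono (Real.sqrt_lt_sqrt ha h)
  linarith

lemma sf_nonneg (u : ℝ) : 0 ≤ sf u := by
  unfold sf
  have := Real.arctan_nonneg.2 (Real.sqrt_nonneg u)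
  linarith

lemma sf_lt_pi (u : ℝ) : sf u < π := by
  unfold sf
  have := Real.arctan_lt_pi_div_two √u
  linarith

lemma sf_deriv {u : ℝ} (hu : 0 < u) :
    HasDerivAt sf (u ^ (-(1/2) : ℝ) * (u + 1) ^ (-1 : ℝ)) u := by
  have h1 := ((Real.hasDerivAt_sqrt hu.ne').arctan).const_mul 2
  refine h1.congr_deriv ?_
  rw [Real.sq_sqrt hu.le, Real.rpow_neg hu.le, Real.rpow_neg_one, ← Real.sqrt_eq_rpow]
  have := Real.sqrt_pos.2 hu
  field_simp
  ring

lemma eps_lemma (m : ℕ) {Ω : ℝ → ℝ} (hΩ : Continuous Ω) {b U₀ : ℝ} (hb : 0 < b) (hb1 : b ≤ 1)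
    (hbU : b < U₀) (hΩp : ∀ u, 0 < u → u ≤ b → 0 < Ω u) (hJ : ∀ u, 0 ≤ u → 0 ≤ J^[m+1] Ω u) :
    ∃ κ > 0, ∃ ε₀ > 0, ∀ U, U₀ ≤ U → ∀ ε, 0 < ε → ε < ε₀ →
      κ ≤ ∫ u in (0:ℝ)..U, (sf (U + ε) - sf (u + ε)) ^ m *
        ((u + ε) ^ (-(1/2) : ℝ) * (u + (ε + 1)) ^ (-1 : ℝ)) * Ω u := by
  obtain ⟨η₁, hη₁, H₁⟩ := AM_rpow hb1 (m+1) (1/2) (by norm_num)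
  have hc0 : 0 < (sf U₀ - sf b) / 2 := by
    have := sf_strict hb.le hbU
    linarith
  set c := (sf U₀ - sf b) / 2 with hc
  have hev : ∀ᶠ ε in 𝓝 (0:ℝ), c < sf (U₀ + ε) - sf (b + ε) := by
    have : ContinuousAt (fun ε => sf (U₀ + ε) - sf (b + ε)) 0 := by
      have := sf_cont
      fun_prop
    apply this.eventually (lt_mem_nhds _)
    simp only [add_zero]
    linarith
  obtain ⟨ε₁, hε₁, hE⟩ := Metric.eventually_nhds_iff.1 hev
  have hJb : 0 < J (J^[m+1] Ω) b := by
    have := Jit_pos hΩ b hΩp (m+2) b hb le_rfl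
    rwa [Function.iterate_succ_apply'] at this
  refine ⟨(η₁ * 3 ^ (-1:ℝ)) * c ^ m * J (J^[m+1] Ω) b, by positivity, min ε₁ 1, by positivity, ?_⟩
  intro U hU ε hε hεl
  have hbU' : b ≤ U := hbU.le.trans hU
  have hε1 : ε < 1 := hεl.trans_le (min_le_right _ _)
  have hcε : c < sf (U₀ + ε) - sf (b + ε) := by
    apply hE
    simp only [dist_zero_right, Real.norm_eq_abs, abs_of_pos hε]
    exact hεl.trans_le (min_le_left _ _)
  have hσ : ∀ N, AM U b N 0 (fun u => (u + ε) ^ (-(1/2) : ℝ) * (u + (ε + 1)) ^ (-1 : ℝ)) := by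
    intro N
    obtain ⟨η₂, hη₂, H₂⟩ := AM_rpow hb1 N (1/2) (by norm_num)
    obtain ⟨η₃, hη₃, H₃⟩ := AM_rpow hb1 N 1 (by norm_num)
    have := AM.mul hbU' le_rfl le_rfl ((H₂ U ε hε (by linarith)).weak hη₂.le)
      ((H₃ U (ε+1) (by linarith) (by linarith)).weak hη₃.le) (fun u hu => by
        have := hu.1
        positivity)
    simpa using this
  have hσ' : AM U b (m+1) (η₁ * 3 ^ (-1:ℝ))
      (fun u => (u + ε) ^ (-(1/2) : ℝ) * (u + (ε + 1)) ^ (-1 : ℝ)) := by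
    obtain ⟨η₃, hη₃, H₃⟩ := AM_rpow hb1 (m+1) 1 (by norm_num)
    apply AM.mul hbU' hη₁.le (by positivity) (H₁ U ε hε (by linarith))
      ((H₃ U (ε+1) (by linarith) (by linarith)).weak hη₃.le)
    intro u hu
    have h1 := hu.1
    have h2 := hu.2
    exact Real.rpow_le_rpow_of_nonpos (by positivity) (by linarith) (by linarith)
  have hd : ∀ u ∈ Icc 0 U, HasDerivAt (fun u => sf (U + ε) - sf (u + ε))
      (-((u + ε) ^ (-(1/2) : ℝ) * (u + (ε + 1)) ^ (-1 : ℝ))) u := by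
    intro u hu
    have h0 : 0 < u + ε := by linarith [hu.1]
    have h1 := ((sf_deriv h0).comp_add_const u ε).const_sub (sf (U + ε))
    rw [← add_assoc]
    exact h1
  have hr0 : ∀ u ∈ Icc 0 U, 0 ≤ sf (U + ε) - sf (u + ε) := fun u hu => by
    have := sf_mono (show u + ε ≤ U + ε by linarith [hu.2])
    linarith
  have hr : ∀ N, AM U b N 0 (fun u => sf (U + ε) - sf (u + ε)) := by
    intro N
    have : AM U b (N+1) 0 (fun u => sf (U + ε) - sf (u + ε)) := ⟨hr0, _, hd, hσ N⟩
    exact this.pred hbU'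
  have hV := VV_mem hbU' hr hσ hd (by simp) hc0.le (fun u hu => by
    have h1 := sf_mono (show u + ε ≤ b + ε by linarith [hu.2])
    have h2 := sf_mono (show U₀ + ε ≤ U + ε by linarith)
    show c ≤ sf (U + ε) - sf (u + ε)
    linarith) m (by positivity) hσ'
  exact S_lemma hb.le hbU' m hΩ hV (fun u hu => hJ u hu.1)

lemma lim_lemma (m : ℕ) {Ω : ℝ → ℝ} (hΩ : Continuous Ω) {U κ ε₀ : ℝ} (hU : 0 < U) (hε₀ : 0 < ε₀)
    (H : ∀ ε, 0 < ε → ε < ε₀ →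
      κ ≤ ∫ u in (0:ℝ)..U, (sf (U + ε) - sf (u + ε)) ^ m *
        ((u + ε) ^ (-(1/2) : ℝ) * (u + (ε + 1)) ^ (-1 : ℝ)) * Ω u) :
    κ ≤ ∫ u in (0:ℝ)..U, (sf U - sf u) ^ m *
        (u ^ (-(1/2) : ℝ) * (u + 1) ^ (-1 : ℝ)) * Ω u := by
  obtain ⟨M, hM⟩ := (isCompact_Icc (a := (0:ℝ)) (b := U)).exists_bound_of_continuousOn
    hΩ.continuousOn
  have ht : Tendsto (fun ε => ∫ u in (0:ℝ)..U, (sf (U + ε) - sf (u + ε)) ^ m *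
        ((u + ε) ^ (-(1/2) : ℝ) * (u + (ε + 1)) ^ (-1 : ℝ)) * Ω u) (𝓝[>] 0)
      (𝓝 (∫ u in (0:ℝ)..U, (sf U - sf u) ^ m *
        (u ^ (-(1/2) : ℝ) * (u + 1) ^ (-1 : ℝ)) * Ω u)) := by
    apply intervalIntegral.tendsto_integral_filter_of_dominated_convergence
      (fun u => π ^ m * (u ^ (-(1/2) : ℝ) * 1) * M)
    · filter_upwards with ε
      have := sf_cont
      apply Measurable.aestronglyMeasurable
      have h2 := this.measurable
      have h3 := hΩ.measurable
      fun_prop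
    · filter_upwards [self_mem_nhdsWithin] with ε hε
      have hε : 0 < ε := hε
      filter_upwards with u hu
      rw [uIoc_of_le hU.le] at hu
      have hu0 := hu.1
      rw [norm_mul, norm_mul, norm_pow, norm_mul]
      have e1 : ‖sf (U + ε) - sf (u + ε)‖ ≤ π := by
        rw [Real.norm_eq_abs, abs_le]
        have := sf_lt_pi (U + ε)
        have := sf_lt_pi (u + ε)
        have := sf_nonneg (U + ε)
        have := sf_nonneg (u + ε)
        constructor <;> linarith
      have e2 : ‖(u + ε) ^ (-(1/2) : ℝ)‖ ≤ u ^ (-(1/2) : ℝ) := by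
        rw [Real.norm_of_nonneg (by positivity)]
        exact Real.rpow_le_rpow_of_nonpos hu0 (by linarith) (by norm_num)
      have e3 : ‖(u + (ε + 1)) ^ (-1 : ℝ)‖ ≤ 1 := by
        rw [Real.norm_of_nonneg (by positivity)]
        exact Real.rpow_le_one_of_one_le_of_nonpos (by linarith) (by norm_num)
      have e4 := hM u ⟨hu.1.le, hu.2⟩
      have e5 := Real.pi_pos
      gcongr
    · have : IntervalIntegrable (fun u : ℝ => u ^ (-(1/2) : ℝ)) volume 0 U :=
        intervalIntegral.intervalIntegrable_rpow' (by norm_num)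
      simpa [mul_comm, mul_assoc, mul_left_comm] using (this.const_mul (π^m)).mul_const M
    · filter_upwards with u hu
      rw [uIoc_of_le hU.le] at hu
      have hu0 := hu.1
      have : ContinuousAt (fun ε => (sf (U + ε) - sf (u + ε)) ^ m *
        ((u + ε) ^ (-(1/2) : ℝ) * (u + (ε + 1)) ^ (-1 : ℝ)) * Ω u) 0 := by
        have h1 := sf_cont
        have h2 : ContinuousAt (fun ε : ℝ => (u + ε) ^ (-(1/2) : ℝ)) 0 :=
          ContinuousAt.rpow_const (by fun_prop) (by left; simp; positivity)
        have h3 : ContinuousAt (fun ε : ℝ => (u + (ε + 1)) ^ (-1 : ℝ)) 0 :=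
          ContinuousAt.rpow_const (by fun_prop) (by left; simp; positivity)
        fun_prop
      have h := this.tendsto.mono_left (nhdsWithin_le_nhds (s := Ioi 0))
      simpa using h
  apply ge_of_tendsto ht
  filter_upwards [Ioo_mem_nhdsGT hε₀] with ε hε
  exact H ε hε.1 hε.2

lemma T_lemma (m : ℕ) {t θ : ℝ} (ht : 0 ≤ t) (hθ : 0 ≤ θ) :
    ∫ s in (0:ℝ)..t, (t - s) ^ m * max (s - θ) 0 =
      (max (t - θ) 0) ^ (m + 2) / ((m + 1) * (m + 2)) := by
  have hz : ∀ w, 0 ≤ w → w ≤ θ → ∫ s in (0:ℝ)..w, (t - s) ^ m * max (s - θ) 0 = 0 := by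
    intro w hw hwθ
    rw [intervalIntegral.integral_congr (g := fun _ => (0:ℝ))]
    · simp
    · intro s hs
      rw [uIcc_of_le hw] at hs
      have : max (s - θ) 0 = 0 := max_eq_right (by linarith [hs.2])
      simp [this]
  have hcont : Continuous fun s : ℝ => (t - s) ^ m * max (s - θ) 0 := by fun_prop
  rcases le_total t θ with h | h
  · rw [hz t ht h, max_eq_right (by linarith)]
    simp
  · rw [← intervalIntegral.integral_add_adjacent_intervals (b := θ)
      (hcont.intervalIntegrable _ _) (hcont.intervalIntegrable _ _), hz θ hθ le_rfl, zero_add]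
    rw [intervalIntegral.integral_eq_sub_of_hasDerivAt
      (f := fun s => -(s - θ) * (t - s) ^ (m+1) / (m+1) - (t - s) ^ (m+2) / ((m+1)*(m+2)))]
    · rw [max_eq_left (by linarith)]
      simp
    · intro s hs
      rw [uIcc_of_le h] at hs
      have hm : max (s - θ) 0 = s - θ := max_eq_left (by linarith [hs.1])
      rw [hm]
      have h1 := ((hasDerivAt_id s).const_sub t)
      have h2 := ((((hasDerivAt_id s).sub_const θ).neg.mul (h1.pow (m+1))).div_const (m+1 : ℝ)).sub
        ((h1.pow (m+2)).div_const ((m+1 : ℝ)*(m+2)))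
      refine h2.congr_deriv ?_
      simp
      field_simp
      ring
    · exact hcont.intervalIntegrable _ _

lemma subst_lemma (m : ℕ) {U θ : ℝ} (hU : 0 < U) (hθ : 0 ≤ θ) :
    IntervalIntegrable (fun u => (sf U - sf u) ^ m *
        (u ^ (-(1/2) : ℝ) * (u + 1) ^ (-1 : ℝ)) * max (sf u - θ) 0) volume 0 U ∧
    ∫ u in (0:ℝ)..U, (sf U - sf u) ^ m *
        (u ^ (-(1/2) : ℝ) * (u + 1) ^ (-1 : ℝ)) * max (sf u - θ) 0 =
      (max (sf U - θ) 0) ^ (m + 2) / ((m + 1) * (m + 2)) := by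
  have hii : IntervalIntegrable (fun u : ℝ => u ^ (-(1/2) : ℝ) * (u + 1) ^ (-1 : ℝ)) volume 0 U := by
    apply IntervalIntegrable.mul_continuousOn
    · exact intervalIntegral.intervalIntegrable_rpow' (by norm_num)
    · apply ContinuousOn.rpow_const (by fun_prop)
      intro u hu
      rw [uIcc_of_le hU.le] at hu
      left
      have := hu.1
      positivity
  have hsc := sf_cont
  have hii2 : IntervalIntegrable (fun u => ((sf U - sf u) ^ m * max (sf u - θ) 0) *
        (u ^ (-(1/2) : ℝ) * (u + 1) ^ (-1 : ℝ))) volume 0 U := by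
    apply IntervalIntegrable.continuousOn_mul hii
    fun_prop
  have heq : (fun u => (sf U - sf u) ^ m *
        (u ^ (-(1/2) : ℝ) * (u + 1) ^ (-1 : ℝ)) * max (sf u - θ) 0) =
      (fun u => ((sf U - sf u) ^ m * max (sf u - θ) 0) *
        (u ^ (-(1/2) : ℝ) * (u + 1) ^ (-1 : ℝ))) := by
    ext u; ring
  rw [heq]
  refine ⟨hii2, ?_⟩
  rw [← T_lemma m (sf_nonneg U) hθ]
  have hg : Continuous (fun s => (sf U - s) ^ m * max (s - θ) 0) := by fun_prop
  have := intervalIntegral.integral_comp_mul_deriv''' (a := 0) (b := U) (f := sf)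
    (f' := fun u => u ^ (-(1/2) : ℝ) * (u + 1) ^ (-1 : ℝ))
    (g := fun s => (sf U - s) ^ m * max (s - θ) 0) sf_cont.continuousOn
    (by
      intro x hx
      rw [min_eq_left hU.le] at hx
      exact (sf_deriv hx.1).hasDerivWithinAt)
    hg.continuousOn
    (hg.continuousOn.integrableOn_compact (isCompact_uIcc.image sf_cont))
    (by
      rw [uIcc_of_le hU.le, integrableOn_Icc_iff_integrableOn_Ioc,
        ← intervalIntegrable_iff_integrableOn_Ioc_of_le hU.le]
      exact hii2)
  rw [sf_zero] at this
  exact this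

end TP

namespace TP
open Filter Topology Module

lemma exists_basis {E : Type*} [NormedAddCommGroup E] [InnerProductSpace ℝ E]
    [FiniteDimensional ℝ E] (k : ℕ)
    (hE : finrank ℝ E = k + 2) (x y : E) (hx : ‖x‖ = 1) (hy : ‖y‖ = 1) :
    ∃ b : OrthonormalBasis (Fin 2 ⊕ Fin k) ℝ E, x = b (Sum.inl 0) ∧
      y = Real.cos (Real.arccos ⟪x, y⟫) • b (Sum.inl 0) +
        Real.sin (Real.arccos ⟪x, y⟫) • b (Sum.inl 1) := by
  have habs := abs_real_inner_le_norm x y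
  rw [hx, hy, one_mul, abs_le] at habs
  rw [Real.cos_arccos habs.1 habs.2]
  set c := ⟪x, y⟫ with hc
  have hcard : finrank ℝ E = Fintype.card (Fin 2 ⊕ Fin k) := by
    rw [hE]; simp; ring
  have hs : Real.sin (Real.arccos c) ^ 2 = 1 - c ^ 2 := by
    rw [Real.sin_sq, Real.cos_arccos habs.1 habs.2]
  set s := Real.sin (Real.arccos c) with hsdef
  have hxx : ⟪x, x⟫ = 1 := by rw [real_inner_self_eq_norm_sq, hx]; norm_num
  have hyy : ⟪y, y⟫ = 1 := by rw [real_inner_self_eq_norm_sq, hy]; norm_num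
  have hyx : ⟪y, x⟫ = c := by rw [real_inner_comm]
  have hn : ‖y - c • x‖ ^ 2 = s ^ 2 := by
    rw [← real_inner_self_eq_norm_sq, hs]
    simp only [inner_sub_left, inner_sub_right, inner_smul_left, inner_smul_right, hxx, hyy, hyx,
      ← hc]
    simp
    ring
  by_cases h0 : s = 0
  · have hv : Orthonormal ℝ (({Sum.inl 0} : Set (Fin 2 ⊕ Fin k)).domRestrict (fun _ => x)) := by
      rw [orthonormal_iff_ite]
      rintro ⟨i, rfl⟩ ⟨j, rfl⟩
      simp [hx]
    obtain ⟨b, hb⟩ := hv.exists_orthonormalBasis_extension_of_card_eq hcard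
    refine ⟨b, (hb _ rfl).symm, ?_⟩
    rw [hb _ rfl, h0, zero_smul, add_zero]
    rw [h0] at hn
    simpa [sub_eq_zero] using hn
  · have hv : Orthonormal ℝ (({Sum.inl 0, Sum.inl 1} : Set (Fin 2 ⊕ Fin k)).domRestrict
        (fun i => if i = Sum.inl 0 then x else s⁻¹ • (y - c • x))) := by
      have e1 : ⟪x, s⁻¹ • (y - c • x)⟫ = 0 := by
        simp [inner_sub_right, inner_smul_right, hx, ← hc]
      have e2 : ⟪s⁻¹ • (y - c • x), x⟫ = 0 := by
        rw [real_inner_comm, e1]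
      have e3 : ⟪s⁻¹ • (y - c • x), s⁻¹ • (y - c • x)⟫ = 1 := by
        rw [real_inner_self_eq_norm_sq, norm_smul, mul_pow, hn]
        simp
        field_simp
      rw [orthonormal_iff_ite]
      rintro ⟨i, rfl | rfl⟩ ⟨j, rfl | rfl⟩
      · simp [hx]
      · rw [if_neg (by intro h; simpa using congrArg Subtype.val h)]
        simpa using e1
      · rw [if_neg (by intro h; simpa using congrArg Subtype.val h)]
        simpa using e2
      · simpa using e3
    obtain ⟨b, hb⟩ := hv.exists_orthonormalBasis_extension_of_card_eq hcard
    have hb0 := hb (Sum.inl 0) (by simp)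
    have hb1 := hb (Sum.inl 1) (by simp)
    simp at hb0 hb1
    refine ⟨b, hb0.symm, ?_⟩
    rw [hb0, hb1, smul_smul, mul_inv_cancel₀ h0]
    simp

lemma vol_decomp {D k : ℕ} (b : OrthonormalBasis (Fin 2 ⊕ Fin k) ℝ (EuclideanSpace ℝ (Fin D)))
    (T : Set ((ℝ × ℝ) × EuclideanSpace ℝ (Fin k))) (hT : MeasurableSet T)
    (S : Set (EuclideanSpace ℝ (Fin D)))
    (hS : ∀ z, z ∈ S ↔ ((⟪b (Sum.inl 0), z⟫, ⟪b (Sum.inl 1), z⟫),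
      WithLp.toLp 2 (fun i : Fin k => ⟪b (Sum.inr i), z⟫)) ∈ T) :
    volume S = volume T := by
  have h1 := b.measurePreserving_repr
  have h2 := PiLp.volume_preserving_ofLp (Fin 2 ⊕ Fin k)
  have h3 := volume_measurePreserving_sumPiEquivProdPi (fun _ : Fin 2 ⊕ Fin k => ℝ)
  have h4 := (volume_preserving_finTwoArrow ℝ).prod (PiLp.volume_preserving_toLp (Fin k))
  have h := h4.comp (h3.comp (h2.comp h1))
  have h5 := h.measure_preimage hT.nullMeasurableSet
  rw [← Measure.volume_eq_prod] at h5
  rw [← h5]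
  congr 1
  ext z
  rw [hS]
  have : ((⟪b (Sum.inl 0), z⟫, ⟪b (Sum.inl 1), z⟫),
      WithLp.toLp 2 (fun i : Fin k => ⟪b (Sum.inr i), z⟫)) =
    (Prod.map (⇑MeasurableEquiv.finTwoArrow) (WithLp.toLp 2) ∘
          ⇑(MeasurableEquiv.sumPiEquivProdPi fun x => ℝ) ∘ WithLp.ofLp ∘ ⇑b.repr) z := by
    simp [MeasurableEquiv.coe_sumPiEquivProdPi, Equiv.sumPiEquivProdPi,
      MeasurableEquiv.finTwoArrow, b.repr_apply_apply]
  rw [this]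
  rfl

lemma vol_q (n : ℕ) (hn : 0 < n) (w : ℝ) :
    volume {q : EuclideanSpace ℝ (Fin (2*n)) | ‖q‖^2 < w} =
      ENNReal.ofReal ((max w 0) ^ n) * volume (Metric.ball (0 : EuclideanSpace ℝ (Fin (2*n))) 1) := by
  rcases le_or_gt w 0 with h | h
  · have : {q : EuclideanSpace ℝ (Fin (2*n)) | ‖q‖^2 < w} = ∅ := by
      ext q
      simp only [mem_ofPred_eq, mem_empty_iff_false, iff_false, not_lt]
      exact h.trans (by positivity)
    rw [this, max_eq_right h, zero_pow hn.ne']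
    simp
  · have : {q : EuclideanSpace ℝ (Fin (2*n)) | ‖q‖^2 < w} = Metric.ball 0 √w := by
      ext q
      simp only [mem_ofPred_eq, mem_ball_zero_iff]
      rw [Real.lt_sqrt (norm_nonneg _)]
    have hne : Nonempty (Fin (2*n)) := ⟨⟨0, by omega⟩⟩
    rw [this, Measure.addHaar_ball _ _ (Real.sqrt_nonneg _), finrank_euclideanSpace_fin, pow_mul,
      Real.sq_sqrt h.le, max_eq_left h.le]

lemma angle_vol {ρ θ : ℝ} (hρ : 0 < ρ) (hθ0 : 0 ≤ θ) (hθ : θ ≤ π) :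
    volume {α : ℝ | α ∈ Ioo (-π) π ∧ 1 < ρ * Real.cos α ∧ 1 < ρ * Real.cos (α - θ)} =
      ENNReal.ofReal (max (sf (ρ^2 - 1) - θ) 0) := by
  rcases le_or_gt ρ 1 with h | h
  · have : {α : ℝ | α ∈ Ioo (-π) π ∧ 1 < ρ * Real.cos α ∧ 1 < ρ * Real.cos (α - θ)} = ∅ := by
      ext α
      simp only [mem_ofPred_eq, mem_empty_iff_false, iff_false]
      rintro ⟨-, h1, -⟩
      have := Real.cos_le_one α
      nlinarith
    rw [this]
    have : sf (ρ^2 - 1) = 0 := by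
      unfold sf
      rw [Real.sqrt_eq_zero_of_nonpos (by nlinarith)]
      simp
    rw [this, max_eq_right (by linarith)]
    simp
  · set r := Real.arccos ρ⁻¹ with hr
    have hsf : sf (ρ^2 - 1) = 2 * r := by
      unfold sf
      rw [Real.arctan_eq_arccos (Real.sqrt_nonneg _), Real.sq_sqrt (by nlinarith),
        show 1 + (ρ^2 - 1) = ρ^2 by ring, Real.sqrt_sq hρ.le]
    have hinv : 0 < ρ⁻¹ := by positivity
    have hinv1 : ρ⁻¹ < 1 := inv_lt_one_of_one_lt₀ h
    have hr0 : 0 ≤ r := Real.arccos_nonneg _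
    have hr2 : r < π/2 := Real.arccos_lt_pi_div_two.2 hinv
    have hcr : Real.cos r = ρ⁻¹ := Real.cos_arccos (by linarith) hinv1.le
    have key : ∀ β, |β| ≤ π → (1 < ρ * Real.cos β ↔ |β| < r) := by
      intro β hβ
      rw [← Real.cos_abs β, ← inv_lt_iff_one_lt_mul₀' hρ, ← hcr]
      exact (Real.strictAntiOn_cos.lt_iff_gt ⟨hr0, by linarith⟩ ⟨abs_nonneg _, hβ⟩)
    have hset : {α : ℝ | α ∈ Ioo (-π) π ∧ 1 < ρ * Real.cos α ∧ 1 < ρ * Real.cos (α - θ)} =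
        Ioo (θ - r) r := by
      ext α
      simp only [mem_ofPred_eq, mem_Ioo]
      constructor
      · rintro ⟨⟨h1, h2⟩, h3, h4⟩
        rw [key α (abs_le.2 ⟨h1.le, h2.le⟩), abs_lt] at h3
        have h5 : -π ≤ α - θ := by
          by_contra hcon
          push Not at hcon
          have : Real.cos (α - θ) ≤ 0 := by
            rw [← Real.cos_neg]
            apply Real.cos_nonpos_of_pi_div_two_le_of_le <;> linarith
          nlinarith
        rw [key (α - θ) (abs_le.2 ⟨h5, by linarith⟩), abs_lt] at h4
        exact ⟨by linarith, h3.2⟩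
      · rintro ⟨h1, h2⟩
        refine ⟨⟨by linarith, by linarith⟩, ?_, ?_⟩
        · rw [key α (abs_le.2 ⟨by linarith, by linarith⟩), abs_lt]
          constructor <;> linarith
        · rw [key _ (abs_le.2 ⟨by linarith, by linarith⟩), abs_lt]
          constructor <;> linarith
    rw [hset, Real.volume_Ioo, hsf]
    rw [show r - (θ - r) = 2 * r - θ by ring]
    rcases le_total (2*r-θ) 0 with h | h
    · rw [max_eq_right h, ENNReal.ofReal_of_nonpos h]; simp
    · rw [max_eq_left h]

end TP

namespace TP
open Filter Topology Module

lemma ms_and {α : Type*} [MeasurableSpace α] {p q : α → Prop}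
    (hp : MeasurableSet {a | p a}) (hq : MeasurableSet {a | q a}) :
    MeasurableSet {a | p a ∧ q a} := hp.inter hq

lemma planar (n : ℕ) {θ B : ℝ} (hθ0 : 0 ≤ θ) (hθ : θ ≤ π) :
    ∫⁻ p : ℝ × ℝ, {p : ℝ × ℝ | 1 < p.1 ∧ 1 < Real.cos θ * p.1 + Real.sin θ * p.2}.indicator
      (fun p => ENNReal.ofReal ((max (1 + B - (p.1^2 + p.2^2)) 0)^n)) p =
    ∫⁻ ρ in Ioi (0:ℝ), ENNReal.ofReal (ρ * (max (1 + B - ρ^2) 0)^n * max (sf (ρ^2 - 1) - θ) 0) := by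
  rw [← lintegral_comp_polarCoord_symm, polarCoord_target, Measure.volume_eq_prod,
    setLIntegral_prod]
  · apply setLIntegral_congr_fun measurableSet_Ioi
    intro ρ hρ
    have hρ : 0 < ρ := hρ
    have hms : MeasurableSet {α : ℝ | α ∈ Ioo (-π) π ∧ 1 < ρ * Real.cos α ∧ 1 < ρ * Real.cos (α - θ)} := by
      refine ms_and measurableSet_Ioo ?_
      apply ms_and <;> (apply measurableSet_lt <;> fun_prop)
    have : ∀ α : ℝ, (Ioo (-π) π).indicator (fun α => ENNReal.ofReal ρ • {p : ℝ × ℝ | 1 < p.1 ∧ 1 < Real.cos θ * p.1 + Real.sin θ * p.2}.indicator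
      (fun p => ENNReal.ofReal ((max (1 + B - (p.1^2 + p.2^2)) 0)^n)) (polarCoord.symm (ρ, α))) α =
      {α : ℝ | α ∈ Ioo (-π) π ∧ 1 < ρ * Real.cos α ∧ 1 < ρ * Real.cos (α - θ)}.indicator
        (fun _ => ENNReal.ofReal (ρ * (max (1 + B - ρ^2) 0)^n)) α := by
      intro α
      have e1 : (ρ * Real.cos α)^2 + (ρ * Real.sin α)^2 = ρ^2 := by
        have := Real.sin_sq_add_cos_sq α
        linear_combination ρ^2 * this
      have e2 : Real.cos θ * (ρ * Real.cos α) + Real.sin θ * (ρ * Real.sin α) =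
          ρ * Real.cos (α - θ) := by
        rw [Real.cos_sub]; ring
      simp only [indicator, polarCoord_symm_apply, mem_ofPred_eq, e1, e2]
      by_cases h1 : α ∈ Ioo (-π) π <;>
        by_cases h2 : 1 < ρ * Real.cos α ∧ 1 < ρ * Real.cos (α - θ) <;>
        simp [h1, h2, ENNReal.ofReal_mul hρ.le]
    beta_reduce
    rw [← lintegral_indicator measurableSet_Ioo]
    simp only [this]
    rw [lintegral_indicator hms, setLIntegral_const, angle_vol hρ hθ0 hθ,
      ← ENNReal.ofReal_mul (by positivity)]
  · apply Measurable.aemeasurable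
    simp only [smul_eq_mul]
    refine Measurable.mul (by fun_prop) ?_
    apply Measurable.comp (g := ({p : ℝ × ℝ | 1 < p.1 ∧ 1 < Real.cos θ * p.1 + Real.sin θ * p.2}.indicator
      (fun p => ENNReal.ofReal ((max (1 + B - (p.1^2 + p.2^2)) 0)^n))))
    · apply Measurable.indicator (by fun_prop)
      apply ms_and <;> (apply measurableSet_lt <;> fun_prop)
    · exact continuous_polarCoord_symm.measurable

lemma radial (n : ℕ) (hn : 0 < n) {θ B : ℝ} (hθ0 : 0 ≤ θ) (hB : 0 ≤ B) :
    ∫⁻ ρ in Ioi (0:ℝ), ENNReal.ofReal (ρ * (max (1 + B - ρ^2) 0)^n * max (sf (ρ^2 - 1) - θ) 0) =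
    ENNReal.ofReal (2⁻¹ * ∫ u in (0:ℝ)..B, (B - u)^n * max (sf u - θ) 0) := by
  have hsc := sf_cont
  have hsq : 1 ≤ √(1 + B) := Real.one_le_sqrt.2 (by linarith)
  have hsq2 : √(1 + B)^2 = 1 + B := Real.sq_sqrt (by linarith)
  have h1 : ∫⁻ ρ in Ioi (0:ℝ), ENNReal.ofReal (ρ * (max (1 + B - ρ^2) 0)^n * max (sf (ρ^2 - 1) - θ) 0)
      = ∫⁻ ρ in Ioc 1 √(1+B), ENNReal.ofReal (ρ * (max (1 + B - ρ^2) 0)^n * max (sf (ρ^2 - 1) - θ) 0) := by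
    rw [← lintegral_indicator measurableSet_Ioi, ← lintegral_indicator measurableSet_Ioc]
    congr 1
    ext ρ
    by_cases h : ρ ∈ Ioc 1 √(1+B)
    · rw [indicator_of_mem h, indicator_of_mem (show ρ ∈ Ioi 0 from lt_trans one_pos h.1)]
    · rw [indicator_of_notMem h]
      by_cases h0 : ρ ∈ Ioi (0:ℝ)
      · rw [indicator_of_mem h0]
        have h0' : 0 < ρ := h0
        rw [mem_Ioc, not_and_or, not_lt, not_le] at h
        rcases h with h | h
        · have : sf (ρ^2 - 1) = 0 := by
            unfold sf
            rw [Real.sqrt_eq_zero_of_nonpos (by nlinarith)]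
            simp
          rw [this, max_eq_right (a := 0 - θ) (by linarith)]
          simp
        · have : max (1 + B - ρ^2) 0 = 0 := max_eq_right (by nlinarith)
          rw [this, zero_pow hn.ne']
          simp
      · rw [indicator_of_notMem h0]
  rw [h1, ← ofReal_integral_eq_lintegral_ofReal]
  · congr 1
    rw [← intervalIntegral.integral_of_le hsq]
    have := intervalIntegral.integral_comp_mul_deriv'' (a := 1) (b := √(1+B)) (f := fun ρ => ρ^2 - 1)
      (f' := fun ρ => 2 * ρ) (g := fun u => (B - u)^n * max (sf u - θ) 0) (by fun_prop)
      (fun x _ => by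
        have := ((hasDerivAt_pow 2 x).sub_const 1).hasDerivWithinAt (s := Ioi x)
        simpa using this) (by fun_prop) (by fun_prop)
    rw [hsq2] at this
    simp only [one_pow, sub_self, add_sub_cancel_left] at this
    rw [← this, ← intervalIntegral.integral_const_mul]
    apply intervalIntegral.integral_congr
    intro ρ hρ
    rw [uIcc_of_le hsq] at hρ
    have : ρ^2 ≤ 1 + B := by
      rw [← hsq2]
      have := hρ.1
      have := hρ.2
      gcongr
    simp only [Function.comp]
    rw [max_eq_left (a := 1 + B - ρ^2) (by linarith)]
    ring
  · apply Continuous.integrableOn_Ioc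
    fun_prop
  · filter_upwards [ae_restrict_mem measurableSet_Ioc] with ρ hρ
    have : 0 < ρ := lt_trans one_pos hρ.1
    positivity

lemma vol_formula (n : ℕ) (hn : 0 < n) : ∃ C : ℝ, 0 < C ∧
    ∀ (x y : EuclideanSpace ℝ (Fin (2*n+2))), ‖x‖ = 1 → ‖y‖ = 1 → ∀ B : ℝ, 0 ≤ B →
    volume {z : EuclideanSpace ℝ (Fin (2*n+2)) | 1 < ⟪x, z⟫ ∧ 1 < ⟪y, z⟫ ∧ ‖z‖^2 < 1 + B} =
      ENNReal.ofReal (C * ∫ u in (0:ℝ)..B, (B - u)^n * max (sf u - Real.arccos ⟪x, y⟫) 0) := by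
  set V := volume (Metric.ball (0 : EuclideanSpace ℝ (Fin (2*n))) 1) with hV
  have hV0 : 0 < V := Metric.measure_ball_pos _ _ one_pos
  have hVt : V ≠ ⊤ := measure_ball_lt_top.ne
  have hV1 : 0 < V.toReal := ENNReal.toReal_pos hV0.ne' hVt
  refine ⟨V.toReal * 2⁻¹, by positivity, ?_⟩
  intro x y hx hy B hB
  obtain ⟨b, hb0, hb1⟩ := exists_basis (2*n) (by simp) x y hx hy
  set θ := Real.arccos ⟪x, y⟫ with hθ
  have hθ0 : 0 ≤ θ := Real.arccos_nonneg _
  have hθπ : θ ≤ π := Real.arccos_le_pi _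
  set T : Set ((ℝ × ℝ) × EuclideanSpace ℝ (Fin (2*n))) :=
    {w | (1 < w.1.1 ∧ 1 < Real.cos θ * w.1.1 + Real.sin θ * w.1.2) ∧
      ‖w.2‖^2 < 1 + B - (w.1.1^2 + w.1.2^2)} with hT
  have hTm : MeasurableSet T := by
    apply ms_and
    · apply ms_and <;> (apply measurableSet_lt <;> fun_prop)
    · apply measurableSet_lt <;> fun_prop
  rw [vol_decomp b T hTm]
  · rw [Measure.volume_eq_prod, Measure.prod_apply hTm]
    have : ∀ p : ℝ × ℝ, volume (Prod.mk p ⁻¹' T) =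
        {p : ℝ × ℝ | 1 < p.1 ∧ 1 < Real.cos θ * p.1 + Real.sin θ * p.2}.indicator
      (fun p => ENNReal.ofReal ((max (1 + B - (p.1^2 + p.2^2)) 0)^n)) p * V := by
      intro p
      by_cases h : 1 < p.1 ∧ 1 < Real.cos θ * p.1 + Real.sin θ * p.2
      · rw [indicator_of_mem (by exact h), hV, ← vol_q n hn]
        congr 1
        ext q
        simp [hT, h]
      · rw [indicator_of_notMem (by exact h)]
        have : Prod.mk p ⁻¹' T = ∅ := by
          ext q
          simp only [hT, mem_preimage, mem_ofPred_eq, mem_empty_iff_false, iff_false]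
          exact fun h' => h h'.1
        rw [this]
        simp
    simp only [this]
    rw [lintegral_mul_const' _ _ hVt, planar n hθ0 hθπ, radial n hn hθ0 hB, mul_comm, mul_assoc,
      ENNReal.ofReal_mul hV1.le, ENNReal.ofReal_toReal hVt]
  · intro z
    have e1 : ⟪x, z⟫ = ⟪b (Sum.inl 0), z⟫ := by rw [← hb0]
    have e2 : ⟪y, z⟫ = Real.cos θ * ⟪b (Sum.inl 0), z⟫ + Real.sin θ * ⟪b (Sum.inl 1), z⟫ := by
      conv_lhs => rw [hb1]
      simp [inner_add_left, inner_smul_left]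
    have e3 : ‖z‖^2 = (⟪b (Sum.inl 0), z⟫^2 + ⟪b (Sum.inl 1), z⟫^2) +
        ‖(WithLp.toLp 2 (fun i : Fin (2*n) => ⟪b (Sum.inr i), z⟫) : EuclideanSpace ℝ (Fin (2*n)))‖^2 := by
      rw [← b.sum_sq_norm_inner_right z, EuclideanSpace.norm_sq_eq]
      simp [Fintype.sum_sum_type, Fin.sum_univ_two]
    simp only [mem_ofPred_eq, hT]
    rw [e1, e2, e3, and_assoc]
    refine and_congr_right fun _ => and_congr_right fun _ => ?_
    constructor <;> intro h <;> linarith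

end TP

namespace TP
open Filter Topology Module

noncomputable def Om {N D : ℕ} (x : Fin N → EuclideanSpace ℝ (Fin D)) (c : Fin N → ℝ) (u : ℝ) : ℝ :=
  ∑ i, ∑ j, c i * c j * max (sf u - Real.arccos ⟪x i, x j⟫) 0

lemma Om_cont {N D : ℕ} (x : Fin N → EuclideanSpace ℝ (Fin D)) (c : Fin N → ℝ) :
    Continuous (Om x c) := by
  have := sf_cont
  unfold Om
  fun_prop

lemma II_sum {ι : Type*} (s : Finset ι) {f : ι → ℝ → ℝ} {a b : ℝ}
    (h : ∀ i ∈ s, IntervalIntegrable (f i) volume a b) :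
    IntervalIntegrable (fun u => ∑ i ∈ s, f i u) volume a b :=
  ⟨integrable_finsetSum _ fun i hi => (h i hi).1, integrable_finsetSum _ fun i hi => (h i hi).2⟩

lemma Om_mono (n : ℕ) (hn : 0 < n) {N : ℕ} (x : Fin N → EuclideanSpace ℝ (Fin (2*n+2)))
    (c : Fin N → ℝ) (hx : ∀ i, ‖x i‖ = 1) : MonotoneOn (J^[n+1] (Om x c)) (Ici 0) := by
  obtain ⟨C, hC, hvol⟩ := vol_formula n hn
  have hsc := sf_cont
  set K : ℝ → Set (EuclideanSpace ℝ (Fin (2*n+2))) := fun B => {z | ‖z‖^2 < 1 + B} with hK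
  set S : Fin N → Set (EuclideanSpace ℝ (Fin (2*n+2))) := fun i => {z | 1 < ⟪x i, z⟫} with hS
  have hKm : ∀ B, MeasurableSet (K B) := fun B => by
    apply measurableSet_lt <;> fun_prop
  have hSm : ∀ i, MeasurableSet (S i) := fun i => by
    apply measurableSet_lt <;> fun_prop
  have hKf : ∀ B, volume (K B) < ⊤ := fun B => by
    apply lt_of_le_of_lt (measure_mono (t := Metric.closedBall 0 √(1+B)) ?_)
      measure_closedBall_lt_top
    intro z hz
    rw [mem_closedBall_zero_iff]
    exact Real.le_sqrt_of_sq_le (le_of_lt hz)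
  set q : EuclideanSpace ℝ (Fin (2*n+2)) → ℝ :=
    fun z => (∑ i, c i * (S i).indicator (fun _ => (1:ℝ)) z)^2 with hq
  have hq2 : ∀ z, q z = ∑ i, ∑ j, c i * c j * (S i ∩ S j).indicator (fun _ => (1:ℝ)) z := by
    intro z
    simp only [hq, sq, Finset.sum_mul_sum]
    refine Finset.sum_congr rfl fun i _ => Finset.sum_congr rfl fun j _ => ?_
    have : (S i ∩ S j).indicator (fun _ => (1:ℝ)) z =
        (S i).indicator (fun _ => (1:ℝ)) z * (S j).indicator (fun _ => (1:ℝ)) z := by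
      by_cases h1 : z ∈ S i <;> by_cases h2 : z ∈ S j <;> simp [h1, h2]
    rw [this]; ring
  have hint : ∀ B i j, IntegrableOn ((S i ∩ S j).indicator (fun _ => (1:ℝ))) (K B) := by
    intro B i j
    have : IntegrableOn (fun _ : EuclideanSpace ℝ (Fin (2*n+2)) => (1:ℝ)) (K B) :=
      integrableOn_const (hKf B).ne
    exact Integrable.indicator this ((hSm i).inter (hSm j))
  have hqi : ∀ B, IntegrableOn q (K B) := by
    intro B
    have : q = fun z => ∑ i, ∑ j, c i * c j * (S i ∩ S j).indicator (fun _ => (1:ℝ)) z :=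
      funext hq2
    rw [this]
    exact integrable_finsetSum _ fun i _ => integrable_finsetSum _ fun j _ =>
      (hint B i j).const_mul _
  have hF : ∀ B, 0 ≤ B → ∫ z in K B, q z = C * (n.factorial * J^[n+1] (Om x c) B) := by
    intro B hB
    simp only [hq2]
    rw [integral_finsetSum _ fun i _ => integrable_finsetSum _ fun j _ =>
      (hint B i j).const_mul _]
    rw [← cauchy_rep hB n (Om_cont x c), ← intervalIntegral.integral_const_mul]
    have e : ∀ u, C * ((B - u)^n * Om x c u) = ∑ i, ∑ j, c i * c j *
        (C * ((B-u)^n * max (sf u - Real.arccos ⟪x i, x j⟫) 0)) := by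
      intro u
      simp only [Om, Finset.mul_sum]
      refine Finset.sum_congr rfl fun i _ => Finset.sum_congr rfl fun j _ => ?_
      ring
    simp only [e]
    rw [intervalIntegral.integral_finsetSum
      (fun i _ => Continuous.intervalIntegrable (by fun_prop) _ _)]
    refine Finset.sum_congr rfl fun i _ => ?_
    rw [integral_finsetSum _ fun j _ => (hint B i j).const_mul _,
      intervalIntegral.integral_finsetSum
        (fun i _ => Continuous.intervalIntegrable (by fun_prop) _ _)]
    refine Finset.sum_congr rfl fun j _ => ?_
    rw [integral_const_mul, intervalIntegral.integral_const_mul,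
      intervalIntegral.integral_const_mul]
    congr 1
    rw [setIntegral_indicator ((hSm i).inter (hSm j)), setIntegral_const, smul_eq_mul, mul_one]
    have hset : K B ∩ (S i ∩ S j) = {z | 1 < ⟪x i, z⟫ ∧ 1 < ⟪x j, z⟫ ∧ ‖z‖^2 < 1 + B} := by
      ext z
      simp only [hK, hS, mem_inter_iff, mem_ofPred_eq]
      tauto
    rw [hset, Measure.real, hvol (x i) (x j) (hx i) (hx j) B hB, ENNReal.toReal_ofReal]
    apply mul_nonneg hC.le
    apply intervalIntegral.integral_nonneg hB
    intro u hu
    have : 0 ≤ B - u := by linarith [hu.2]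
    positivity
  intro a ha b hb hab
  have h1 : ∫ z in K a, q z ≤ ∫ z in K b, q z := by
    apply setIntegral_mono_set (hqi b)
    · exact Eventually.of_forall fun z => sq_nonneg _
    · apply LE.le.eventuallyLE
      intro z hz
      have hz : ‖z‖^2 < 1 + a := hz
      show ‖z‖^2 < 1 + b
      linarith
  rw [hF a ha, hF b hb] at h1
  have h2 := le_of_mul_le_mul_left h1 hC
  exact le_of_mul_le_mul_left h2 (by positivity)

lemma Om_pos {N D : ℕ} (x : Fin N → EuclideanSpace ℝ (Fin D)) (c : Fin N → ℝ)
    (hx : ∀ i, ‖x i‖ = 1) (hinj : Function.Injective x) (hc : c ≠ 0) :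
    ∃ b₀ > 0, ∀ u, 0 < u → u ≤ b₀ → 0 < Om x c u := by
  have hθ : ∀ i j, i ≠ j → 0 < Real.arccos ⟪x i, x j⟫ := by
    intro i j hij
    rw [Real.arccos_pos]
    exact inner_lt_one_iff_real_of_norm_eq_one (hx i) (hx j) |>.2 fun h => hij (hinj h)
  have hev : ∀ᶠ u in 𝓝 (0:ℝ), ∀ i j, i ≠ j → sf u < Real.arccos ⟪x i, x j⟫ := by
    simp only [eventually_all]
    intro i j hij
    have : Tendsto sf (𝓝 0) (𝓝 0) := by
      have := sf_cont.tendsto 0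
      rwa [sf_zero] at this
    exact this.eventually_lt_const (hθ i j hij)
  obtain ⟨b, hb, hb2⟩ := Metric.eventually_nhds_iff.1 hev
  refine ⟨b/2, by positivity, fun u hu hub => ?_⟩
  have hsu : 0 < sf u := by
    have := sf_strict le_rfl hu
    rwa [sf_zero] at this
  have h := hb2 (y := u) (by rw [Real.dist_eq, sub_zero, abs_of_pos hu]; linarith)
  have : Om x c u = ∑ i, c i * c i * sf u := by
    unfold Om
    refine Finset.sum_congr rfl fun i _ => ?_
    rw [Finset.sum_eq_single i]
    · rw [real_inner_self_eq_norm_sq, hx i]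
      simp [hsu.le]
    · intro j _ hj
      rw [max_eq_right]
      · simp
      · linarith [h i j hj.symm]
    · simp
  rw [this]
  obtain ⟨i, hi⟩ := Function.ne_iff.1 hc
  apply Finset.sum_pos'
  · intro j _
    exact mul_nonneg (mul_self_nonneg _) hsu.le
  · exact ⟨i, Finset.mem_univ _, mul_pos (mul_self_pos.2 hi) hsu⟩

lemma sf_tan {t : ℝ} (h0 : 0 < t) (h1 : t < π) : sf (Real.tan (t/2)^2) = t := by
  unfold sf
  have : 0 < Real.tan (t/2) := Real.tan_pos_of_pos_of_lt_pi_div_two (by linarith) (by linarith)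
  rw [Real.sqrt_sq this.le, Real.arctan_tan (by linarith) (by linarith)]
  ring

lemma quad_bound (m : ℕ) {N : ℕ} (x : Fin N → EuclideanSpace ℝ (Fin (2*(m+1)+2)))
    (c : Fin N → ℝ) (hx : ∀ i, ‖x i‖ = 1) (hinj : Function.Injective x) (hc : c ≠ 0)
    {U₀ : ℝ} (hU₀ : 0 < U₀) : ∃ κ > 0, ∀ U, U₀ ≤ U →
      κ ≤ ∑ i, ∑ j, c i * c j * (max (sf U - Real.arccos ⟪x i, x j⟫) 0)^(m+2) := by
  have hcont := Om_cont x c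
  obtain ⟨b₀, hb₀, hpos⟩ := Om_pos x c hx hinj hc
  have hJ := Jit_nonneg_of_mono hcont (m+1) (Om_mono (m+1) (by omega) x c hx)
  set b := min (min b₀ 1) (U₀/2) with hb
  have hbp : 0 < b := by positivity
  obtain ⟨κ, hκ, ε₀, hε₀, H⟩ := eps_lemma m hcont (b := b) (U₀ := U₀) hbp
    ((min_le_left _ _).trans (min_le_right _ _))
    (lt_of_le_of_lt (min_le_right _ _) (by linarith))
    (fun u h1 h2 => hpos u h1 (h2.trans ((min_le_left _ _).trans (min_le_left _ _)))) hJ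
  refine ⟨κ * ((m+1)*(m+2)), by positivity, fun U hU => ?_⟩
  have hU0 : 0 < U := by linarith
  have h1 := lim_lemma m hcont hU0 hε₀ (H U hU)
  have e : ∫ u in (0:ℝ)..U, (sf U - sf u)^m*(u^(-(1/2):ℝ)*(u+1)^(-1:ℝ))*Om x c u =
      ∑ i, ∑ j, c i * c j * ((max (sf U - Real.arccos ⟪x i, x j⟫) 0)^(m+2)/((m+1)*(m+2))) := by
    have e1 : ∀ u, (sf U - sf u)^m*(u^(-(1/2):ℝ)*(u+1)^(-1:ℝ))*Om x c u = ∑ i, ∑ j, c i * c j *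
      ((sf U - sf u)^m*(u^(-(1/2):ℝ)*(u+1)^(-1:ℝ))*max (sf u - Real.arccos ⟪x i, x j⟫) 0) := by
      intro u
      simp only [Om, Finset.mul_sum]
      refine Finset.sum_congr rfl fun i _ => Finset.sum_congr rfl fun j _ => ?_
      ring
    simp only [e1]
    have hs := fun i j => subst_lemma m (U := U) (θ := Real.arccos ⟪x i, x j⟫) hU0
      (Real.arccos_nonneg _)
    rw [intervalIntegral.integral_finsetSum]
    · refine Finset.sum_congr rfl fun i _ => ?_
      rw [intervalIntegral.integral_finsetSum]
      · refine Finset.sum_congr rfl fun j _ => ?_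
        rw [intervalIntegral.integral_const_mul, (hs i j).2]
      · intro j _
        exact (hs i j).1.const_mul _
    · intro i _
      exact II_sum _ fun j _ => (hs i j).1.const_mul _
  rw [e] at h1
  have hm : (0:ℝ) < (m+1)*(m+2) := by positivity
  have e2 : ∑ i, ∑ j, c i * c j * ((max (sf U - Real.arccos ⟪x i, x j⟫) 0)^(m+2)/((m+1)*(m+2))) =
      (∑ i, ∑ j, c i * c j * (max (sf U - Real.arccos ⟪x i, x j⟫) 0)^(m+2))/((m+1)*(m+2)) := by
    simp only [Finset.sum_div, mul_div_assoc]
  rw [e2, le_div_iff₀ hm] at h1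
  exact h1

lemma quad_pos (m : ℕ) {N : ℕ} (x : Fin N → EuclideanSpace ℝ (Fin (2*(m+1)+2)))
    (c : Fin N → ℝ) (hx : ∀ i, ‖x i‖ = 1) (hinj : Function.Injective x) (hc : c ≠ 0)
    {t : ℝ} (h0 : 0 < t) (h1 : t ≤ π) :
    0 < ∑ i, ∑ j, c i * c j * (max (t - Real.arccos ⟪x i, x j⟫) 0)^(m+2) := by
  rcases h1.lt_or_eq with h1 | rfl
  · have htan : 0 < Real.tan (t/2) :=
      Real.tan_pos_of_pos_of_lt_pi_div_two (by linarith) (by linarith)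
    obtain ⟨κ, hκ, H⟩ := quad_bound m x c hx hinj hc (U₀ := Real.tan (t/2)^2) (by positivity)
    have := H _ le_rfl
    rw [sf_tan h0 h1] at this
    linarith
  · obtain ⟨κ, hκ, H⟩ := quad_bound m x c hx hinj hc (U₀ := 1) one_pos
    refine lt_of_lt_of_le hκ ?_
    have hc : Continuous fun s : ℝ =>
      ∑ i, ∑ j, c i * c j * (max (s - Real.arccos ⟪x i, x j⟫) 0)^(m+2) := by fun_prop
    have ht : Tendsto sf atTop (𝓝 π) := by
      have h2 : Tendsto (fun u => Real.arctan √u) atTop (𝓝 (π/2)) :=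
        (tendsto_nhds_of_tendsto_nhdsWithin Real.tendsto_arctan_atTop).comp
          Real.tendsto_sqrt_atTop
      have := h2.const_mul 2
      rwa [mul_div_cancel₀ _ (two_ne_zero)] at this
    exact ge_of_tendsto ((hc.tendsto π).comp ht)
      (eventually_atTop.2 ⟨1, fun U hU => H U hU⟩)

lemma mix_int {k : ℕ} {β t θ : ℝ} (hβ : 0 < β) :
    IntervalIntegrable (fun s => (max (s - θ) 0)^k * (t - s)^(β - 1)) volume 0 t := by
  have h : IntervalIntegrable (fun s : ℝ => s^(β-1)) volume t 0 :=
    intervalIntegral.intervalIntegrable_rpow' (by linarith)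
  have h2 := h.comp_sub_left t
  simp only [sub_self, sub_zero] at h2
  exact h2.continuousOn_mul (by fun_prop)

lemma mix (k : ℕ) (hk : 0 < k) {β : ℝ} (hβ : 0 < β) : ∃ K > 0, ∀ t θ : ℝ, 0 < t → 0 ≤ θ →
    ∫ s in (0:ℝ)..t, (max (s - θ) 0)^k * (t - s)^(β - 1) = K * (max (t - θ) 0)^(k + β) := by
  refine ⟨∫ s in (0:ℝ)..1, (max (s - 0) 0)^k * (1 - s)^(β - 1), ?_, ?_⟩
  · apply intervalIntegral.intervalIntegral_pos_of_pos_on (mix_int hβ) _ one_pos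
    intro s hs
    have h1 := hs.1
    have h2 : 0 < 1 - s := by linarith [hs.2]
    rw [sub_zero, max_eq_left h1.le]
    positivity
  · intro t θ ht hθ
    rcases le_or_gt t θ with h | h
    · rw [max_eq_right (a := t - θ) (by linarith), Real.zero_rpow (by positivity), mul_zero]
      apply intervalIntegral.integral_zero_ae
      refine Eventually.of_forall fun s hs => ?_
      rw [uIoc_of_le ht.le] at hs
      rw [max_eq_right (by linarith [hs.2]), zero_pow hk.ne', zero_mul]
    · have hi := mix_int (k := k) (β := β) (t := t) (θ := θ) hβ
      rw [← intervalIntegral.integral_add_adjacent_intervals (b := θ)]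
      rotate_left
      · exact hi.mono_set (by rw [uIcc_of_le hθ, uIcc_of_le ht.le]; exact Icc_subset_Icc le_rfl h.le)
      · exact hi.mono_set (by rw [uIcc_of_le h.le, uIcc_of_le ht.le]; exact Icc_subset_Icc hθ le_rfl)
      have e0 : ∫ s in (0:ℝ)..θ, (max (s - θ) 0)^k * (t - s)^(β - 1) = 0 := by
        apply intervalIntegral.integral_zero_ae
        refine Eventually.of_forall fun s hs => ?_
        rw [uIoc_of_le hθ] at hs
        rw [max_eq_right (by linarith [hs.2]), zero_pow hk.ne', zero_mul]
      have ha : 0 < t - θ := by linarith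
      have := intervalIntegral.smul_integral_comp_add_mul (a := 0) (b := 1)
        (fun s => (max (s - θ) 0)^k * (t - s)^(β - 1)) (t - θ) θ
      rw [mul_zero, mul_one, add_zero, add_sub_cancel] at this
      rw [e0, zero_add, ← this, smul_eq_mul, max_eq_left ha.le,
        ← intervalIntegral.integral_const_mul, ← intervalIntegral.integral_mul_const]
      apply intervalIntegral.integral_congr
      intro s hs
      rw [uIcc_of_le zero_le_one] at hs
      have hs1 := hs.1
      have hs2 : 0 ≤ 1 - s := by linarith [hs.2]
      simp only
      rw [sub_zero, max_eq_left hs1, add_sub_cancel_left, max_eq_left (by positivity),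
        show t - (θ + (t - θ) * s) = (t - θ) * (1 - s) by ring, Real.mul_rpow ha.le hs2, mul_pow,
        Real.rpow_add ha, Real.rpow_natCast, Real.rpow_sub_one ha.ne']
      field_simp

lemma quad_pos_real (m : ℕ) {N : ℕ} (x : Fin N → EuclideanSpace ℝ (Fin (2*(m+1)+2)))
    (c : Fin N → ℝ) (hx : ∀ i, ‖x i‖ = 1) (hinj : Function.Injective x) (hc : c ≠ 0)
    {t : ℝ} (h0 : 0 < t) (h1 : t ≤ π) {δ : ℝ} (hδ : ((m + 2 : ℕ) : ℝ) ≤ δ) :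
    0 < ∑ i, ∑ j, c i * c j * (max (t - Real.arccos ⟪x i, x j⟫) 0)^δ := by
  rcases hδ.eq_or_lt with rfl | hδ
  · simp only [Real.rpow_natCast]
    exact quad_pos m x c hx hinj hc h0 h1
  · obtain ⟨K, hK, H⟩ := mix (m+2) (by omega) (β := δ - (m+2:ℕ)) (by linarith)
    have hβ : 0 < δ - (m+2:ℕ) := by linarith
    have hII := fun i j => mix_int (k := m+2) (t := t) (θ := Real.arccos ⟪x i, x j⟫) hβ
    rw [add_sub_cancel] at H
    have hII2 : ∀ i, IntervalIntegrable (fun s => ∑ j, c i * c j *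
        ((max (s - Real.arccos ⟪x i, x j⟫) 0)^(m+2) * (t - s)^(δ - (m+2:ℕ) - 1))) volume 0 t := by
      intro i
      exact II_sum _ fun j _ => (hII i j).const_mul _
    have hII3 : IntervalIntegrable (fun s => ∑ i, ∑ j, c i * c j *
        ((max (s - Real.arccos ⟪x i, x j⟫) 0)^(m+2) * (t - s)^(δ - (m+2:ℕ) - 1))) volume 0 t := by
      exact II_sum _ fun i _ => hII2 i
    have e : ∫ s in (0:ℝ)..t, ∑ i, ∑ j, c i * c j *
        ((max (s - Real.arccos ⟪x i, x j⟫) 0)^(m+2) * (t - s)^(δ - (m+2:ℕ) - 1)) =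
        K * ∑ i, ∑ j, c i * c j * (max (t - Real.arccos ⟪x i, x j⟫) 0)^δ := by
      rw [intervalIntegral.integral_finsetSum (fun i _ => hII2 i), Finset.mul_sum]
      refine Finset.sum_congr rfl fun i _ => ?_
      rw [intervalIntegral.integral_finsetSum (fun j _ => (hII i j).const_mul _), Finset.mul_sum]
      refine Finset.sum_congr rfl fun j _ => ?_
      rw [intervalIntegral.integral_const_mul, H t _ h0 (Real.arccos_nonneg _)]
      ring
    have hpos : 0 < ∫ s in (0:ℝ)..t, ∑ i, ∑ j, c i * c j *
        ((max (s - Real.arccos ⟪x i, x j⟫) 0)^(m+2) * (t - s)^(δ - (m+2:ℕ) - 1)) := by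
      apply intervalIntegral.intervalIntegral_pos_of_pos_on hII3 _ h0
      intro s hs
      have := quad_pos m x c hx hinj hc hs.1 (hs.2.le.trans h1)
      have hts : 0 < t - s := by linarith [hs.2]
      have h3 := mul_pos this (Real.rpow_pos_of_pos hts (δ - (m+2:ℕ) - 1))
      simp only [Finset.sum_mul, mul_assoc] at h3 ⊢
      exact h3
    rw [e] at hpos
    exact pos_of_mul_pos_right hpos hK.le

lemma exists_embed {d D : ℕ} (h : d ≤ D) :
    ∃ _f : EuclideanSpace ℝ (Fin d) →ₗᵢ[ℝ] EuclideanSpace ℝ (Fin D), True := by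
  have hv : Orthonormal ℝ (fun i : Fin d => EuclideanSpace.basisFun (Fin D) ℝ (Fin.castLE h i)) :=
    (EuclideanSpace.basisFun (Fin D) ℝ).orthonormal.comp _ (Fin.castLE_injective h)
  let b := EuclideanSpace.basisFun (Fin d) ℝ
  refine ⟨LinearMap.isometryOfOrthonormal (v := b.toBasis)
    (b.toBasis.constr ℝ (fun i : Fin d => EuclideanSpace.basisFun (Fin D) ℝ (Fin.castLE h i)))
    (by simpa using b.orthonormal) ?_, trivial⟩
  convert hv using 1
  ext1 i
  simp only [Function.comp]
  rw [Basis.constr_basis]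

end TP

theorem truncated_power_strictly_pos_def (d : ℕ) (hd : 3 ≤ d) (t : ℝ)
    (ht : t ∈ Set.Ioc (0:ℝ) π) (δ : ℝ) (hδ : ((⌈(d : ℝ) / 2⌉ : ℤ) : ℝ) ≤ δ) :
    StrictPosDefOnSphere d (fun θ => if θ ≤ t then (t - θ) ^ δ else 0) := by
  intro N x hx hinj
  obtain ⟨m, hm⟩ : ∃ m : ℕ, m + 2 = (d + 1) / 2 := ⟨(d+1)/2 - 2, by omega⟩
  have hδ' : ((m + 2 : ℕ) : ℝ) ≤ δ := by
    refine le_trans ?_ hδ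
    have h1 : (d:ℝ)/2 ≤ ((⌈(d : ℝ) / 2⌉ : ℤ) : ℝ) := Int.le_ceil _
    have h2 : (d:ℝ) ≤ ((2 * ⌈(d : ℝ) / 2⌉ : ℤ) : ℝ) := by push_cast; linarith
    have h3 : (d:ℤ) ≤ 2 * ⌈(d : ℝ) / 2⌉ := by exact_mod_cast h2
    have h4 : ((m+2 : ℕ):ℤ) ≤ ⌈(d : ℝ) / 2⌉ := by omega
    exact_mod_cast h4
  have hδ0 : 0 < δ := lt_of_lt_of_le (by positivity) hδ'
  obtain ⟨f, -⟩ := TP.exists_embed (d := d) (D := 2*(m+1)+2) (by omega)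
  apply Matrix.PosDef.of_dotProduct_mulVec_pos
  · ext i j
    simp [Matrix.conjTranspose_apply, real_inner_comm]
  · intro c hc
    have := TP.quad_pos_real m (fun i => f (x i)) c (fun i => by rw [f.norm_map, hx])
      (f.injective.comp hinj) hc ht.1 ht.2 hδ'
    simp only [LinearIsometry.inner_map_map] at this
    refine lt_of_lt_of_eq this (Eq.symm ?_)
    simp only [dotProduct, Matrix.mulVec, Matrix.of_apply, Finset.mul_sum, star_trivial]
    refine Finset.sum_congr rfl fun i _ => Finset.sum_congr rfl fun j _ => ?_
    split_ifs with h
    · rw [max_eq_left (by linarith)]; ring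
    · rw [max_eq_right (by linarith), Real.zero_rpow hδ0.ne']; ring
end
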